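/- arXiv:2109.09877 — 2 statements merged into one kernel-verified Lean document; each statement's English description precedes it below -/
import Mathlib

section
/- Let p > 3 be a prime. Then ∑_{k=1}^{(p-1)/2} (p/2 - k)·H_{2k}/((p+1-2k)(p+2k)) ≡ q_p(2) - (1/4)·q_p(2)^2 - 3p·q_p(2) + (p/2)·q_p(2)^2 + (p/4)·q_p(2)^3 + (13/32)·p·B_{p-3} modulo p^2 (as rational numbers). -/
/-- Two rationals `a` and `b` are congruent modulo `p^r`:
the `p`-adic valuation of `a - b` is at least `r`, i.e. `a - b = c * p^r`
with the denominator of `c` not divisible by `p`. -/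
def ratCongr (p r : ℕ) (a b : ℚ) : Prop :=
  ∃ c : ℚ, a - b = c * (p : ℚ) ^ r ∧ ¬ (p ∣ c.den)

/-- The Fermat quotient `q_p(2) = (2^(p-1) - 1)/p` (an integer for odd primes),
viewed as a rational number. -/
def fermatQ (p : ℕ) : ℚ := ((2 : ℚ) ^ (p - 1) - 1) / p

open Finset

/-- The subring of `p`-integral rational numbers. -/
def pIntegers (p : ℕ) [hp : Fact p.Prime] : Subring ℚ where
  carrier := {x | padicNorm p x ≤ 1}
  mul_mem' {a b} ha hb := by
    simp only [Set.mem_ofPred_eq, padicNorm.mul] at *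
    exact mul_le_one₀ ha (padicNorm.nonneg b) hb
  one_mem' := by simp
  add_mem' {a b} ha hb := padicNorm.nonarchimedean.trans (max_le ha hb)
  zero_mem' := by simp
  neg_mem' {a} ha := by simpa [padicNorm.neg] using ha

/-- Congruence modulo `p ^ r`, written additively so that it can be substituted. -/
def PCong (p r : ℕ) [Fact p.Prime] (a b : ℚ) : Prop :=
  ∃ c ∈ pIntegers p, a = b + (p : ℚ) ^ r * c

section Congruences

variable {p r : ℕ} [hp : Fact p.Prime]

theorem mem_pIntegers_iff {x : ℚ} : x ∈ pIntegers p ↔ padicNorm p x ≤ 1 := Iff.rfl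

theorem natCast_inv_mem_pIntegers {k : ℕ} (hk : ¬ p ∣ k) : (k : ℚ)⁻¹ ∈ pIntegers p := by
  rw [mem_pIntegers_iff, ← one_div, padicNorm.div, (padicNorm.nat_eq_one_iff k).2 hk]
  simp

theorem inv_mem_pIntegers_of_lt {x : ℕ} (h0 : 0 < x) (hx : x < p) : (x : ℚ)⁻¹ ∈ pIntegers p :=
  natCast_inv_mem_pIntegers (Nat.not_dvd_of_pos_of_lt h0 hx)

theorem inv_sub_mem_pIntegers {x : ℕ} (h0 : 0 < x) (hx : x < p) :
    ((p : ℚ) - x)⁻¹ ∈ pIntegers p := by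
  have := inv_mem_pIntegers_of_lt (p := p) (x := p - x) (by omega) (by omega)
  rwa [Nat.cast_sub hx.le] at this

theorem not_dvd_den_of_mem_pIntegers {x : ℚ} (hx : x ∈ pIntegers p) : ¬ p ∣ x.den := by
  intro h
  have h1 : ¬ p ∣ x.num.natAbs := fun h2 =>
    hp.out.one_lt.ne' (Nat.eq_one_of_dvd_coprimes x.reduced h2 h)
  have h3 : padicNorm p (x.num : ℚ) = 1 := by
    rw [padicNorm.int_eq_one_iff]
    exact fun h2 => h1 (Int.natCast_dvd.1 h2)
  have h4 : padicNorm p (x.den : ℚ) < 1 := (padicNorm.nat_lt_one_iff _).2 h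
  have h5 : padicNorm p x * padicNorm p (x.den : ℚ) = 1 := by
    rw [← padicNorm.mul, Rat.mul_den_eq_num, h3]
  have h6 := mem_pIntegers_iff.1 hx
  have h7 := padicNorm.nonneg (p := p) (x.den : ℚ)
  nlinarith [mul_le_mul_of_nonneg_right h6 h7]

theorem PCong.ratCongr {a b : ℚ} (h : PCong p r a b) : ratCongr p r a b := by
  obtain ⟨c, hc, rfl⟩ := h
  exact ⟨c, by ring, not_dvd_den_of_mem_pIntegers hc⟩

theorem PCong.of_eq {a b : ℚ} (h : a = b) : PCong p r a b := ⟨0, zero_mem _, by simp [h]⟩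

theorem PCong.trans {a b c : ℚ} (h : PCong p r a b) (h' : PCong p r b c) : PCong p r a c := by
  obtain ⟨u, hu, rfl⟩ := h
  obtain ⟨v, hv, rfl⟩ := h'
  exact ⟨v + u, add_mem hv hu, by ring⟩

theorem PCong.symm {a b : ℚ} (h : PCong p r a b) : PCong p r b a := by
  obtain ⟨u, hu, rfl⟩ := h
  exact ⟨-u, neg_mem hu, by ring⟩

theorem PCong.add {a b c d : ℚ} (h : PCong p r a b) (h' : PCong p r c d) :
    PCong p r (a + c) (b + d) := by
  obtain ⟨u, hu, rfl⟩ := h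
  obtain ⟨v, hv, rfl⟩ := h'
  exact ⟨u + v, add_mem hu hv, by ring⟩

theorem PCong.mul_left {a b c : ℚ} (hc : c ∈ pIntegers p) (h : PCong p r a b) :
    PCong p r (c * a) (c * b) := by
  obtain ⟨u, hu, rfl⟩ := h
  exact ⟨c * u, mul_mem hc hu, by ring⟩

theorem PCong.mul {a b c d : ℚ} (hb : b ∈ pIntegers p) (hc : c ∈ pIntegers p)
    (h : PCong p r a b) (h' : PCong p r c d) : PCong p r (a * c) (b * d) := by
  refine PCong.trans ?_ (h'.mul_left hb)
  rw [mul_comm a c, mul_comm b c]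
  exact h.mul_left hc

theorem PCong.sum {ι : Type*} {s : Finset ι} {f g : ι → ℚ}
    (h : ∀ i ∈ s, PCong p r (f i) (g i)) : PCong p r (∑ i ∈ s, f i) (∑ i ∈ s, g i) := by
  classical
  induction s using Finset.induction_on with
  | empty => exact .of_eq rfl
  | insert a s ha ih =>
    rw [sum_insert ha, sum_insert ha]
    exact (h a (mem_insert_self a s)).add (ih fun i hi => h i (mem_insert_of_mem hi))

theorem PCong.mem {a b : ℚ} (h : PCong p r a b) (hb : b ∈ pIntegers p) : a ∈ pIntegers p := by
  obtain ⟨u, hu, rfl⟩ := h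
  exact add_mem hb (mul_mem (pow_mem (natCast_mem _ p) r) hu)

theorem PCong.of_succ {a b : ℚ} (h : PCong p (r + 1) a b) : PCong p r a b := by
  obtain ⟨u, hu, rfl⟩ := h
  exact ⟨p * u, mul_mem (natCast_mem _ p) hu, by ring⟩

theorem pcong_inv_sub {x : ℕ} (h0 : 0 < x) (hx : x < p) :
    PCong p 2 ((p : ℚ) - x)⁻¹ (-(x : ℚ)⁻¹ - p * ((x : ℚ) ^ 2)⁻¹) := by
  have h1 : (x : ℚ) ≠ 0 := by positivity
  have h2 : (p : ℚ) - x ≠ 0 := sub_ne_zero.2 (by exact_mod_cast hx.ne')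
  have h3 := inv_mem_pIntegers_of_lt h0 hx
  refine ⟨(x : ℚ)⁻¹ ^ 2 * ((p : ℚ) - x)⁻¹, mul_mem (pow_mem h3 2) (inv_sub_mem_pIntegers h0 hx), ?_⟩
  field_simp
  ring

theorem pcong_inv_sub_sq {x : ℕ} (h0 : 0 < x) (hx : x < p) :
    PCong p 2 (((p : ℚ) - x) ^ 2)⁻¹ (((x : ℚ) ^ 2)⁻¹ + 2 * p * ((x : ℚ) ^ 3)⁻¹) := by
  have h1 : (x : ℚ) ≠ 0 := by positivity
  have h2 : (p : ℚ) - x ≠ 0 := sub_ne_zero.2 (by exact_mod_cast hx.ne')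
  have h3 := inv_mem_pIntegers_of_lt h0 hx
  refine ⟨(3 * x - 2 * p) * ((x : ℚ)⁻¹ ^ 3 * ((p : ℚ) - x)⁻¹ ^ 2), ?_, ?_⟩
  · exact mul_mem (sub_mem (mul_mem (ofNat_mem _ 3) (natCast_mem _ x))
      (mul_mem (ofNat_mem _ 2) (natCast_mem _ p)))
      (mul_mem (pow_mem h3 3) (pow_mem (inv_sub_mem_pIntegers h0 hx) 2))
  · field_simp
    ring

end Congruences

section FiniteSums

theorem sum_Icc_two_mul_reflect {M : Type*} [AddCommMonoid M] (f : ℕ → M) {n k : ℕ} (hk : k ≤ n) :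
    ∑ x ∈ Icc 1 (2 * k), f x =
      ∑ j ∈ Icc 1 k, f (2 * j) + ∑ i ∈ Icc (n + 1 - k) n, f (2 * n + 1 - 2 * i) := by
  induction k with
  | zero => simp
  | succ k ih =>
    have h1 : 2 * (k + 1) = 2 * k + 1 + 1 := by ring
    have h2 : Icc (n + 1 - (k + 1)) n = insert (n - k) (Icc (n + 1 - k) n) := by
      ext i; simp only [mem_Icc, mem_insert]; omega
    rw [h1, sum_Icc_succ_top (by omega), sum_Icc_succ_top (by omega), ih (by omega),
      sum_Icc_succ_top (by omega), h2, sum_insert (by simp; omega),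
      show 2 * n + 1 - 2 * (n - k) = 2 * k + 1 by omega, h1]
    abel

theorem sum_Icc_two_mul_parity {M : Type*} [AddCommMonoid M] (f : ℕ → M) (n : ℕ) :
    ∑ x ∈ Icc 1 (2 * n), f x = ∑ j ∈ Icc 1 n, (f (2 * j) + f (2 * n + 1 - 2 * j)) := by
  rw [sum_Icc_two_mul_reflect f le_rfl, sum_add_distrib, Nat.add_sub_cancel_left]

theorem sum_Icc_two_mul_fold {M : Type*} [AddCommMonoid M] (f : ℕ → M) (n : ℕ) :
    ∑ x ∈ Icc 1 (2 * n), f x = ∑ j ∈ Icc 1 n, (f j + f (2 * n + 1 - j)) := by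
  have h : Icc 1 (2 * n) = Icc 1 n ∪ Icc (n + 1) (2 * n) := by
    ext i; simp only [mem_Icc, mem_union]; omega
  rw [h, sum_union, sum_add_distrib]
  · congr 1
    refine sum_nbij' (fun i => 2 * n + 1 - i) (fun i => 2 * n + 1 - i) ?_ ?_ ?_ ?_ ?_ <;>
      simp only [mem_Icc] <;> intro i hi
    any_goals omega
    congr 1; omega
  · rw [disjoint_left]; intro i; simp only [mem_Icc]; omega

theorem sum_mul_sum_Icc_le {K : Type*} [Field K] [CharZero K] (a : ℕ → K) (n : ℕ) :
    ∑ j ∈ Icc 1 n, a j * ∑ i ∈ Icc 1 j, a i =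
      ((∑ j ∈ Icc 1 n, a j) ^ 2 + ∑ j ∈ Icc 1 n, a j ^ 2) / 2 := by
  induction n with
  | zero => simp
  | succ n ih =>
    rw [sum_Icc_succ_top (by omega), ih, sum_Icc_succ_top (by omega),
      sum_Icc_succ_top (by omega : 1 ≤ n + 1) (fun j => a j ^ 2)]
    ring

theorem sum_Icc_mul_sum_Icc_ge {R : Type*} [CommRing R] (a b : ℕ → R) (n : ℕ) :
    ∑ j ∈ Icc 1 n, a j * ∑ i ∈ Icc j n, b i = ∑ i ∈ Icc 1 n, b i * ∑ j ∈ Icc 1 i, a j := by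
  simp_rw [mul_sum]
  rw [sum_comm' (t' := Icc 1 n) (s' := fun i => Icc 1 i)]
  · simp_rw [mul_comm]
  · intro x y; simp only [mem_Icc]; omega

theorem sum_Icc_inv_mul_inv_reflect (n : ℕ) :
    ∑ j ∈ Icc 1 n, (j : ℚ)⁻¹ * ((n : ℚ) + 1 - j)⁻¹ =
      2 * (∑ j ∈ Icc 1 n, (j : ℚ)⁻¹) / (n + 1) := by
  have h : ∑ j ∈ Icc 1 n, ((n : ℚ) + 1 - j)⁻¹ = ∑ j ∈ Icc 1 n, (j : ℚ)⁻¹ := by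
    refine sum_nbij' (fun i => n + 1 - i) (fun i => n + 1 - i) ?_ ?_ ?_ ?_ ?_ <;>
      simp only [mem_Icc] <;> intro i hi
    any_goals omega
    rw [Nat.cast_sub (by omega)]; push_cast; rfl
  have h2 : ∀ j ∈ Icc 1 n, (j : ℚ)⁻¹ * ((n : ℚ) + 1 - j)⁻¹ =
      ((j : ℚ)⁻¹ + ((n : ℚ) + 1 - j)⁻¹) / (n + 1) := by
    intro j hj
    rw [mem_Icc] at hj
    have h3 : (j : ℚ) ≠ 0 := by have : 0 < j := hj.1; positivity
    have h4 : (n : ℚ) + 1 - j ≠ 0 := by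
      have : (j : ℚ) ≤ n := by exact_mod_cast hj.2
      linarith
    have h5 : (n : ℚ) + 1 ≠ 0 := by positivity
    field_simp
    ring
  rw [sum_congr rfl h2, ← sum_div, sum_add_distrib, h]
  ring

theorem sum_Icc_inv_mul_harmonic_add_one_sub (n : ℕ) :
    ∑ j ∈ Icc 1 n, (j : ℚ)⁻¹ * harmonic (n + 1 - j) =
      ∑ j ∈ Icc 1 n, (j : ℚ)⁻¹ * harmonic (n - j) + 2 * harmonic n / (n + 1) := by
  rw [harmonic_eq_sum_Icc (n := n), ← sum_Icc_inv_mul_inv_reflect, ← sum_add_distrib]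
  refine sum_congr rfl fun j hj => ?_
  rw [mem_Icc] at hj
  rw [show n + 1 - j = n - j + 1 by omega, harmonic_succ]
  push_cast [Nat.cast_sub hj.2]
  ring

theorem sum_Icc_inv_mul_harmonic_sub (n : ℕ) :
    ∑ j ∈ Icc 1 n, (j : ℚ)⁻¹ * harmonic (n - j) =
      harmonic n ^ 2 - ∑ j ∈ Icc 1 n, ((j : ℚ) ^ 2)⁻¹ := by
  induction n with
  | zero => simp
  | succ n ih =>
    rw [sum_Icc_succ_top (by omega), sum_Icc_inv_mul_harmonic_add_one_sub, ih,
      sum_Icc_succ_top (by omega), harmonic_succ]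
    have : (n : ℚ) + 1 ≠ 0 := by positivity
    simp
    field_simp
    ring

theorem harmonic_two_mul {p n k : ℕ} (hpn : p = 2 * n + 1) (hk : k ≤ n) :
    harmonic (2 * k) = harmonic k / 2 + ∑ i ∈ Icc (n + 1 - k) n, ((p : ℚ) - (2 * i : ℕ))⁻¹ := by
  rw [harmonic_eq_sum_Icc, sum_Icc_two_mul_reflect _ hk, harmonic_eq_sum_Icc, sum_div]
  congr 1
  · refine sum_congr rfl fun j _ => ?_
    push_cast
    rw [mul_inv]
    ring
  · refine sum_congr rfl fun j hj => ?_
    rw [mem_Icc] at hj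
    rw [← hpn, Nat.cast_sub (by omega)]

end FiniteSums

/-- The generalized harmonic number `∑ j ≤ n, 1 / j ^ r`. -/
def genHarmonic (r n : ℕ) : ℚ := ∑ j ∈ Icc 1 n, ((j : ℚ) ^ r)⁻¹

section HalfHarmonic

variable {p n : ℕ} [hp : Fact p.Prime]

theorem genHarmonic_mem_pIntegers {m : ℕ} (r : ℕ) (hm : m < p) :
    genHarmonic r m ∈ pIntegers p := by
  refine sum_mem fun j hj => ?_
  rw [mem_Icc] at hj
  rw [← inv_pow]
  exact pow_mem (inv_mem_pIntegers_of_lt hj.1 (by omega)) r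

theorem harmonic_mem_pIntegers {m : ℕ} (hm : m < p) : harmonic m ∈ pIntegers p := by
  have := genHarmonic_mem_pIntegers (p := p) 1 hm
  simpa [genHarmonic, harmonic_eq_sum_Icc] using this

theorem two_inv_mem_pIntegers (hp3 : 3 < p) : (2 : ℚ)⁻¹ ∈ pIntegers p := by
  exact_mod_cast inv_mem_pIntegers_of_lt (p := p) (x := 2) (by omega) (by omega)

theorem three_inv_mem_pIntegers (hp3 : 3 < p) : (3 : ℚ)⁻¹ ∈ pIntegers p := by
  exact_mod_cast inv_mem_pIntegers_of_lt (p := p) (x := 3) (by omega) (by omega)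

theorem genHarmonic_two_fold (hpn : p = 2 * n + 1) :
    PCong p 2 (genHarmonic 2 (2 * n)) (2 * genHarmonic 2 n + 2 * p * genHarmonic 3 n) := by
  have h : 2 * genHarmonic 2 n + 2 * p * genHarmonic 3 n =
      ∑ j ∈ Icc 1 n, (((j : ℚ) ^ 2)⁻¹ + (((j : ℚ) ^ 2)⁻¹ + 2 * p * ((j : ℚ) ^ 3)⁻¹)) := by
    simp only [genHarmonic, mul_sum, ← sum_add_distrib]
    exact sum_congr rfl fun j _ => by ring
  rw [h, genHarmonic, sum_Icc_two_mul_fold]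
  refine PCong.sum fun j hj => (PCong.of_eq rfl).add ?_
  rw [mem_Icc] at hj
  rw [← hpn, Nat.cast_sub (by omega)]
  exact pcong_inv_sub_sq hj.1 (by omega)

theorem genHarmonic_two_parity (hpn : p = 2 * n + 1) :
    PCong p 2 (genHarmonic 2 (2 * n)) (genHarmonic 2 n / 2 + p * genHarmonic 3 n / 4) := by
  have h : genHarmonic 2 n / 2 + p * genHarmonic 3 n / 4 =
      ∑ j ∈ Icc 1 n, ((((2 * j : ℕ) : ℚ) ^ 2)⁻¹ +
        ((((2 * j : ℕ) : ℚ) ^ 2)⁻¹ + 2 * p * (((2 * j : ℕ) : ℚ) ^ 3)⁻¹)) := by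
    simp only [genHarmonic, mul_sum, sum_div, ← sum_add_distrib]
    refine sum_congr rfl fun j hj => ?_
    push_cast
    rw [mul_pow, mul_pow, mul_inv, mul_inv]
    ring
  rw [h, genHarmonic, sum_Icc_two_mul_parity]
  refine PCong.sum fun j hj => (PCong.of_eq rfl).add ?_
  rw [mem_Icc] at hj
  rw [← hpn, Nat.cast_sub (by omega)]
  exact pcong_inv_sub_sq (by omega) (by omega)

theorem genHarmonic_two_half (hpn : p = 2 * n + 1) (hp3 : 3 < p) :
    PCong p 2 (genHarmonic 2 n) (-(7 / 6) * p * genHarmonic 3 n) := by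
  obtain ⟨u, hu, h1⟩ := genHarmonic_two_fold hpn
  obtain ⟨v, hv, h2⟩ := genHarmonic_two_parity hpn
  refine ⟨2 * 3⁻¹ * (v - u), mul_mem (mul_mem (ofNat_mem _ 2) (three_inv_mem_pIntegers hp3))
    (sub_mem hv hu), ?_⟩
  linarith

theorem genHarmonic_two_half_one (hpn : p = 2 * n + 1) (hp3 : 3 < p) :
    PCong p 1 (genHarmonic 2 n) 0 := by
  obtain ⟨u, hu, h⟩ := genHarmonic_two_half hpn hp3
  refine ⟨-7 * 2⁻¹ * 3⁻¹ * genHarmonic 3 n + p * u, ?_, by rw [h]; ring⟩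
  exact add_mem (mul_mem (mul_mem (mul_mem (neg_mem (ofNat_mem _ 7)) (two_inv_mem_pIntegers hp3))
    (three_inv_mem_pIntegers hp3)) (genHarmonic_mem_pIntegers 3 (by omega)))
    (mul_mem (natCast_mem _ p) hu)

theorem genHarmonic_two_full (hpn : p = 2 * n + 1) (hp3 : 3 < p) :
    PCong p 1 (genHarmonic 2 (2 * n)) 0 := by
  obtain ⟨u, hu, h⟩ := genHarmonic_two_half_one hpn hp3
  obtain ⟨v, hv, h'⟩ := genHarmonic_two_fold hpn
  refine ⟨2 * u + 2 * genHarmonic 3 n + p * v, ?_, by rw [h', h]; ring⟩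
  exact add_mem (add_mem (mul_mem (ofNat_mem _ 2) hu) (mul_mem (ofNat_mem _ 2)
    (genHarmonic_mem_pIntegers 3 (by omega)))) (mul_mem (natCast_mem _ p) hv)

/-- Wolstenholme's theorem for harmonic numbers. -/
theorem harmonic_full (hpn : p = 2 * n + 1) (hp3 : 3 < p) : PCong p 2 (harmonic (2 * n)) 0 := by
  have h : -p * genHarmonic 2 n =
      ∑ j ∈ Icc 1 n, ((j : ℚ)⁻¹ + (-(j : ℚ)⁻¹ - p * ((j : ℚ) ^ 2)⁻¹)) := by
    simp only [genHarmonic, mul_sum]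
    exact sum_congr rfl fun j _ => by ring
  have h1 : PCong p 2 (harmonic (2 * n)) (-p * genHarmonic 2 n) := by
    rw [h, harmonic_eq_sum_Icc, sum_Icc_two_mul_fold]
    refine PCong.sum fun j hj => (PCong.of_eq rfl).add ?_
    rw [mem_Icc] at hj
    rw [← hpn, Nat.cast_sub (by omega)]
    exact pcong_inv_sub hj.1 (by omega)
  obtain ⟨u, hu, h2⟩ := genHarmonic_two_half_one hpn hp3
  exact h1.trans ⟨-u, neg_mem hu, by rw [h2]; ring⟩

/-- The convolution sum giving the second partial fraction of the summand. -/
theorem sum_harmonic_two_mul_reflect (hpn : p = 2 * n + 1) (hp3 : 3 < p) :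
    PCong p 2 (∑ j ∈ Icc 1 n, ((2 * j : ℕ) : ℚ)⁻¹ * harmonic (2 * (n + 1 - j)))
      (harmonic n ^ 2 / 8 - 3 / 8 * genHarmonic 2 n + harmonic n / (p + 1) -
        p / 8 * ∑ i ∈ Icc 1 n, ((i : ℚ) ^ 2)⁻¹ * harmonic i) := by
  have h1 : ∑ j ∈ Icc 1 n, ((2 * j : ℕ) : ℚ)⁻¹ * harmonic (2 * (n + 1 - j)) =
      (∑ j ∈ Icc 1 n, (j : ℚ)⁻¹ * harmonic (n + 1 - j)) / 4 +
      ∑ j ∈ Icc 1 n, ((2 * j : ℕ) : ℚ)⁻¹ * ∑ i ∈ Icc j n, ((p : ℚ) - (2 * i : ℕ))⁻¹ := by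
    rw [sum_div, ← sum_add_distrib]
    refine sum_congr rfl fun j hj => ?_
    rw [mem_Icc] at hj
    rw [harmonic_two_mul hpn (by omega), show n + 1 - (n + 1 - j) = j by omega]
    push_cast
    rw [mul_inv]
    ring
  have h2 : PCong p 2
      (∑ j ∈ Icc 1 n, ((2 * j : ℕ) : ℚ)⁻¹ * ∑ i ∈ Icc j n, ((p : ℚ) - (2 * i : ℕ))⁻¹)
      (∑ j ∈ Icc 1 n, ((2 * j : ℕ) : ℚ)⁻¹ * ∑ i ∈ Icc j n,
        (-((2 * i : ℕ) : ℚ)⁻¹ - p * (((2 * i : ℕ) : ℚ) ^ 2)⁻¹)) := by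
    refine PCong.sum fun j hj => ?_
    rw [mem_Icc] at hj
    refine PCong.mul_left (inv_mem_pIntegers_of_lt (by omega) (by omega)) (PCong.sum fun i hi => ?_)
    rw [mem_Icc] at hi
    exact pcong_inv_sub (by omega) (by omega)
  have h3 : ∑ j ∈ Icc 1 n, ((2 * j : ℕ) : ℚ)⁻¹ * ∑ i ∈ Icc j n,
        (-((2 * i : ℕ) : ℚ)⁻¹ - p * (((2 * i : ℕ) : ℚ) ^ 2)⁻¹) =
      -(∑ i ∈ Icc 1 n, (i : ℚ)⁻¹ * ∑ j ∈ Icc 1 i, (j : ℚ)⁻¹) / 4 -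
        p / 8 * ∑ i ∈ Icc 1 n, ((i : ℚ) ^ 2)⁻¹ * ∑ j ∈ Icc 1 i, (j : ℚ)⁻¹ := by
    rw [← sum_Icc_mul_sum_Icc_ge, ← sum_Icc_mul_sum_Icc_ge, mul_sum, neg_div, sum_div,
      ← sum_neg_distrib, ← sum_sub_distrib]
    refine sum_congr rfl fun j _ => ?_
    have : ∑ i ∈ Icc j n, (-((2 * i : ℕ) : ℚ)⁻¹ - p * (((2 * i : ℕ) : ℚ) ^ 2)⁻¹) =
        -(∑ i ∈ Icc j n, (i : ℚ)⁻¹) / 2 - p / 4 * ∑ i ∈ Icc j n, ((i : ℚ) ^ 2)⁻¹ := by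
      rw [mul_sum, neg_div, sum_div, ← sum_neg_distrib, ← sum_sub_distrib]
      refine sum_congr rfl fun i _ => ?_
      push_cast
      rw [mul_pow, mul_inv, mul_inv]
      ring
    rw [this]
    push_cast
    rw [mul_inv]
    ring
  rw [h1]
  refine (PCong.add (.of_eq rfl) h2).trans (.of_eq ?_)
  rw [h3, sum_mul_sum_Icc_le, sum_Icc_inv_mul_harmonic_add_one_sub, sum_Icc_inv_mul_harmonic_sub]
  simp only [← harmonic_eq_sum_Icc, genHarmonic, inv_pow]
  have h4 : (n : ℚ) + 1 = (p + 1) / 2 := by rw [hpn]; push_cast; ring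
  rw [h4]
  have h5 : (p : ℚ) + 1 ≠ 0 := by positivity
  field_simp
  ring

theorem sum_inv_mul_harmonic_two_mul (hpn : p = 2 * n + 1) (hp3 : 3 < p) :
    PCong p 1 (∑ k ∈ Icc 1 n, ((2 * k : ℕ) : ℚ)⁻¹ * harmonic (2 * k)) (harmonic n ^ 2 / 8) := by
  have h1 : PCong p 1 (∑ k ∈ Icc 1 n, ((2 * k : ℕ) : ℚ)⁻¹ * harmonic (2 * k))
      (∑ k ∈ Icc 1 n, ((2 * k : ℕ) : ℚ)⁻¹ *
        (harmonic k / 2 + ∑ i ∈ Icc (n + 1 - k) n, (-((2 * i : ℕ) : ℚ)⁻¹))) := by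
    refine PCong.sum fun k hk => ?_
    rw [mem_Icc] at hk
    rw [harmonic_two_mul hpn hk.2]
    refine PCong.mul_left (inv_mem_pIntegers_of_lt (by omega) (by omega))
      ((PCong.of_eq rfl).add (PCong.sum fun i hi => ?_))
    rw [mem_Icc] at hi
    have hi0 : 0 < 2 * i := by omega
    have hip : 2 * i < p := by omega
    refine (pcong_inv_sub hi0 hip).of_succ.trans ⟨-(((2 * i : ℕ) : ℚ) ^ 2)⁻¹, ?_, by ring⟩
    rw [← inv_pow]
    exact neg_mem (pow_mem (inv_mem_pIntegers_of_lt hi0 hip) 2)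
  have h2 : ∑ k ∈ Icc 1 n, ((2 * k : ℕ) : ℚ)⁻¹ *
        (harmonic k / 2 + ∑ i ∈ Icc (n + 1 - k) n, (-((2 * i : ℕ) : ℚ)⁻¹)) =
      (∑ k ∈ Icc 1 n, (k : ℚ)⁻¹ * ∑ i ∈ Icc 1 k, (i : ℚ)⁻¹) / 4 -
      (harmonic n * ∑ k ∈ Icc 1 n, (k : ℚ)⁻¹) / 4 +
      (∑ k ∈ Icc 1 n, (k : ℚ)⁻¹ * harmonic (n - k)) / 4 := by
    rw [mul_sum, sum_div, sum_div, sum_div, ← sum_sub_distrib, ← sum_add_distrib]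
    refine sum_congr rfl fun k hk => ?_
    rw [mem_Icc] at hk
    have h3 : harmonic n = harmonic (n - k) + ∑ i ∈ Icc (n + 1 - k) n, (i : ℚ)⁻¹ := by
      have : Icc 1 n = Icc 1 (n - k) ∪ Icc (n + 1 - k) n := by
        ext i; simp only [mem_Icc, mem_union]; omega
      rw [harmonic_eq_sum_Icc, this, sum_union, harmonic_eq_sum_Icc]
      rw [disjoint_left]; intro i; simp only [mem_Icc]; omega
    have h4 : ∑ i ∈ Icc (n + 1 - k) n, (-((2 * i : ℕ) : ℚ)⁻¹) =
        -(∑ i ∈ Icc (n + 1 - k) n, (i : ℚ)⁻¹) / 2 := by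
      rw [neg_div, sum_div, ← sum_neg_distrib]
      refine sum_congr rfl fun i _ => ?_
      push_cast
      rw [mul_inv]
      ring
    rw [h4, h3, ← harmonic_eq_sum_Icc]
    push_cast
    rw [mul_inv]
    ring
  refine h1.trans ?_
  rw [h2, sum_mul_sum_Icc_le, sum_Icc_inv_mul_harmonic_sub]
  obtain ⟨u, hu, h⟩ := genHarmonic_two_half_one hpn hp3
  simp only [← harmonic_eq_sum_Icc, inv_pow]
  rw [← genHarmonic, h]
  refine ⟨-u * 2⁻¹ ^ 3, mul_mem (neg_mem hu) (pow_mem (two_inv_mem_pIntegers hp3) 3), by ring⟩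

end HalfHarmonic

section FermatQuotient

theorem sum_Icc_alternating {R : Type*} [CommRing R] (f : ℕ → R) (n : ℕ) :
    ∑ x ∈ Icc 1 (2 * n), (-1) ^ (x - 1) * f x =
      ∑ x ∈ Icc 1 (2 * n), f x - 2 * ∑ j ∈ Icc 1 n, f (2 * j) := by
  induction n with
  | zero => simp
  | succ n ih =>
    rw [show 2 * (n + 1) = 2 * n + 1 + 1 by ring, sum_Icc_succ_top (by omega),
      sum_Icc_succ_top (by omega), ih, sum_Icc_succ_top (by omega) f,
      sum_Icc_succ_top (by omega) f, sum_Icc_succ_top (by omega : 1 ≤ n + 1),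
      show 2 * (n + 1) = 2 * n + 1 + 1 by ring]
    simp only [Nat.add_sub_cancel, pow_succ, pow_mul]
    simp
    ring

variable {p n : ℕ} [hp : Fact p.Prime]

theorem choose_pred_pcong {k : ℕ} (hk : k < p) :
    PCong p 2 ((p - 1).choose k) ((-1) ^ k * (1 - p * harmonic k)) := by
  induction k with
  | zero => exact .of_eq (by simp)
  | succ k ih =>
    have h0 : ((k + 1 : ℕ) : ℚ) ≠ 0 := by positivity
    have hinv := inv_mem_pIntegers_of_lt (p := p) (x := k + 1) (by omega) hk
    have h1 : ((p - 1).choose (k + 1) : ℚ) =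
        (p * ((k + 1 : ℕ) : ℚ)⁻¹ - 1) * (p - 1).choose k := by
      have h2 : ((p - 1).choose (k + 1) : ℚ) * (k + 1 : ℕ) =
          (p - 1).choose k * (p - (k + 1 : ℕ)) := by
        rw [← Nat.cast_sub hk.le, show p - (k + 1) = p - 1 - k by omega]
        exact_mod_cast Nat.choose_succ_right_eq (p - 1) k
      field_simp
      linear_combination h2
    rw [h1]
    refine (PCong.mul_left (sub_mem (mul_mem (natCast_mem _ p) hinv) (one_mem _))
      (ih (by omega))).trans ⟨-(-1) ^ k * ((k + 1 : ℕ) : ℚ)⁻¹ * harmonic k, ?_, ?_⟩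
    · exact mul_mem (mul_mem (neg_mem (pow_mem (neg_mem (one_mem _)) k)) hinv)
        (harmonic_mem_pIntegers (by omega))
    · rw [harmonic_succ]
      ring

theorem two_mul_fermatQ (hpn : p = 2 * n + 1) :
    2 * fermatQ p = ∑ k ∈ Icc 1 (2 * n), (k : ℚ)⁻¹ * (p - 1).choose (k - 1) := by
  have hp0 : (p : ℚ) ≠ 0 := by exact_mod_cast hp.out.ne_zero
  have h1 : ∀ k ∈ Icc 1 (2 * n), (k : ℚ)⁻¹ * (p - 1).choose (k - 1) = p.choose k / p := by
    intro k hk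
    rw [mem_Icc] at hk
    have h2 : p * (p - 1).choose (k - 1) = p.choose k * k := by
      have := Nat.add_one_mul_choose_eq (p - 1) (k - 1)
      rwa [show p - 1 + 1 = p by omega, show k - 1 + 1 = k by omega] at this
    have h2' : (p : ℚ) * (p - 1).choose (k - 1) = p.choose k * k := by exact_mod_cast h2
    have hk0 : (k : ℚ) ≠ 0 := by have : 0 < k := hk.1; positivity
    field_simp
    linear_combination h2'
  have h3 : (2 : ℚ) ^ p = ∑ k ∈ Icc 1 (2 * n), (p.choose k : ℚ) + 2 := by
    have h4 := Nat.sum_range_choose p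
    rw [sum_range_succ, show range p = insert 0 (Icc 1 (2 * n)) by
      ext i; simp only [mem_range, mem_insert, mem_Icc]; omega, sum_insert (by simp)] at h4
    simp only [Nat.choose_zero_right, Nat.choose_self] at h4
    have h5 : ((2 ^ p : ℕ) : ℚ) = ((1 + ∑ k ∈ Icc 1 (2 * n), p.choose k + 1 : ℕ) : ℚ) := by rw [h4]
    push_cast at h5
    linear_combination h5
  rw [sum_congr rfl h1, ← sum_div, fermatQ, ← mul_div_assoc]
  congr 1
  have h6 : (2 : ℚ) ^ p = 2 * 2 ^ (p - 1) := by
    rw [← pow_succ', show p - 1 + 1 = p by omega]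
  linear_combination h3 - h6

theorem two_mul_fermatQ_pcong (hpn : p = 2 * n + 1) (hp3 : 3 < p) :
    PCong p 2 (2 * fermatQ p) (-harmonic n + p * harmonic n ^ 2 / 4) := by
  set f : ℕ → ℚ := fun k => (k : ℚ)⁻¹ * (1 - p * (harmonic k - (k : ℚ)⁻¹)) with hf
  have h1 : PCong p 2 (2 * fermatQ p) (∑ k ∈ Icc 1 (2 * n), (-1) ^ (k - 1) * f k) := by
    rw [two_mul_fermatQ hpn]
    refine PCong.sum fun k hk => ?_
    rw [mem_Icc] at hk
    refine (PCong.mul_left (inv_mem_pIntegers_of_lt (by omega) (by omega))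
      (choose_pred_pcong (by omega))).trans (.of_eq ?_)
    have h2 : harmonic k = harmonic (k - 1) + (k : ℚ)⁻¹ := by
      conv_lhs => rw [show k = k - 1 + 1 by omega, harmonic_succ, show k - 1 + 1 = k by omega]
    simp only [hf]
    rw [h2]
    ring
  have h3 : ∑ k ∈ Icc 1 (2 * n), f k = harmonic (2 * n) -
      p * ((harmonic (2 * n) ^ 2 + genHarmonic 2 (2 * n)) / 2) + p * genHarmonic 2 (2 * n) := by
    have h4 := sum_mul_sum_Icc_le (fun k : ℕ => (k : ℚ)⁻¹) (2 * n)
    simp only [← harmonic_eq_sum_Icc, inv_pow] at h4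
    rw [← genHarmonic] at h4
    rw [← h4]
    simp only [genHarmonic, mul_sum]
    rw [harmonic_eq_sum_Icc, ← sum_sub_distrib, ← sum_add_distrib]
    refine sum_congr rfl fun k _ => ?_
    simp only [hf]
    ring
  have h5 : 2 * ∑ j ∈ Icc 1 n, f (2 * j) = harmonic n -
      2 * p * ∑ k ∈ Icc 1 n, ((2 * k : ℕ) : ℚ)⁻¹ * harmonic (2 * k) +
      p * genHarmonic 2 n / 2 := by
    simp only [genHarmonic, mul_sum, sum_div]
    rw [harmonic_eq_sum_Icc, ← sum_sub_distrib, ← sum_add_distrib]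
    refine sum_congr rfl fun k _ => ?_
    simp only [hf]
    push_cast
    rw [mul_inv]
    ring
  refine h1.trans ?_
  rw [sum_Icc_alternating, h3, h5]
  obtain ⟨a, ha, h6⟩ := harmonic_full hpn hp3
  obtain ⟨b, hb, h7⟩ := genHarmonic_two_full hpn hp3
  obtain ⟨c, hc, h8⟩ := genHarmonic_two_half_one hpn hp3
  obtain ⟨d, hd, h9⟩ := sum_inv_mul_harmonic_two_mul hpn hp3
  rw [h6, h7, h8, h9]
  have h2 := two_inv_mem_pIntegers hp3
  have hpp := natCast_mem (pIntegers p) p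
  refine ⟨a - p ^ 3 * a ^ 2 * 2⁻¹ + b * 2⁻¹ + 2 * d - c * 2⁻¹, ?_, by ring⟩
  exact sub_mem (add_mem (add_mem (sub_mem ha (mul_mem (mul_mem (pow_mem hpp 3) (pow_mem ha 2)) h2))
    (mul_mem hb h2)) (mul_mem (ofNat_mem _ 2) hd)) (mul_mem hc h2)

theorem fermatQ_mem_pIntegers (hpn : p = 2 * n + 1) (hp3 : 3 < p) :
    fermatQ p ∈ pIntegers p := by
  have h2 := two_inv_mem_pIntegers hp3
  have hH := harmonic_mem_pIntegers (p := p) (m := n) (by omega)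
  have h := (two_mul_fermatQ_pcong hpn hp3).mem (by
    rw [show p * harmonic n ^ 2 / 4 = p * harmonic n ^ 2 * 2⁻¹ ^ 2 by ring]
    exact add_mem (neg_mem hH) (mul_mem (mul_mem (natCast_mem _ p) (pow_mem hH 2)) (pow_mem h2 2)))
  have h3 := mul_mem h2 h
  rwa [inv_mul_cancel_left₀ two_ne_zero] at h3

theorem harmonic_half (hpn : p = 2 * n + 1) (hp3 : 3 < p) :
    PCong p 2 (harmonic n) (-2 * fermatQ p + p * fermatQ p ^ 2) := by
  have h2 := two_inv_mem_pIntegers hp3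
  have hq := fermatQ_mem_pIntegers hpn hp3
  have hpp := natCast_mem (pIntegers p) p
  have hH := harmonic_mem_pIntegers (p := p) (m := n) (by omega)
  obtain ⟨c, hc, h⟩ := two_mul_fermatQ_pcong hpn hp3
  obtain ⟨d, hd, h'⟩ : ∃ d ∈ pIntegers p, harmonic n = -2 * fermatQ p + p * d :=
    ⟨harmonic n ^ 2 * 2⁻¹ ^ 2 + p * c,
      add_mem (mul_mem (pow_mem hH 2) (pow_mem h2 2)) (mul_mem hpp hc), by linear_combination h⟩
  refine ⟨c - fermatQ p * d + p * d ^ 2 * 2⁻¹ ^ 2, ?_, ?_⟩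
  · exact add_mem (sub_mem hc (mul_mem hq hd)) (mul_mem (mul_mem hpp (pow_mem hd 2)) (pow_mem h2 2))
  · have h3 : harmonic n ^ 2 = (-2 * fermatQ p + p * d) ^ 2 := by rw [h']
    linear_combination h + (p : ℚ) / 4 * h3

end FermatQuotient

section BernoulliNumbers

variable {p n : ℕ} [hp : Fact p.Prime]

theorem bernoulli_mem_pIntegers {k : ℕ} (hk : k + 1 < p) : bernoulli k ∈ pIntegers p := by
  induction k using Nat.strong_induction_on with
  | _ k ih =>
    rcases Nat.eq_zero_or_pos k with rfl | hk0
    · simp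
    have h := sum_bernoulli (k + 1)
    rw [sum_range_succ, if_neg (by omega), Nat.choose_succ_self_right] at h
    have hne : ((k + 1 : ℕ) : ℚ) ≠ 0 := by positivity
    have h1 : bernoulli k =
        ((k + 1 : ℕ) : ℚ)⁻¹ * -∑ i ∈ range k, ((k + 1).choose i : ℚ) * bernoulli i := by
      rw [eq_inv_mul_iff_mul_eq₀ hne]
      linear_combination h
    rw [h1]
    refine mul_mem (inv_mem_pIntegers_of_lt (by omega) hk) (neg_mem (sum_mem fun i hi => ?_))
    rw [mem_range] at hi
    exact mul_mem (natCast_mem _ _) (ih i hi (by omega))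

theorem PCong.pow {r : ℕ} {a b : ℚ} (ha : a ∈ pIntegers p) (hb : b ∈ pIntegers p)
    (h : PCong p r a b) (m : ℕ) : PCong p r (a ^ m) (b ^ m) := by
  induction m with
  | zero => exact .of_eq (by simp)
  | succ m ih => rw [pow_succ, pow_succ]; exact ih.mul (pow_mem hb m) ha h

theorem pcong_inv_pow {x a b : ℕ} (h0 : 0 < x) (hx : x < p) (hab : a + b = p - 1) :
    PCong p 1 (((x : ℚ) ^ a)⁻¹) ((x : ℚ) ^ b) := by
  have h1 : (x : ℤ) ^ (p - 1) ≡ 1 [ZMOD p] := Int.ModEq.pow_card_sub_one_eq_one hp.out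
    (Nat.isCoprime_iff_coprime.2 (Nat.coprime_of_lt_prime h0.ne' hx hp.out).symm)
  obtain ⟨c, hc⟩ := h1.symm.dvd
  have hc' : (x : ℚ) ^ a * x ^ b - 1 = p * c := by rw [← pow_add, hab]; exact_mod_cast hc
  have hx0 : (x : ℚ) ≠ 0 := by positivity
  refine ⟨-((x : ℚ)⁻¹ ^ a * c), neg_mem (mul_mem (pow_mem (inv_mem_pIntegers_of_lt h0 hx) a)
    (intCast_mem _ c)), ?_⟩
  rw [inv_pow]
  field_simp
  linear_combination -hc'

theorem sum_pow_full {m : ℕ} (hm : m + 1 < p) :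
    PCong p 1 (∑ k ∈ range p, (k : ℚ) ^ m) 0 := by
  rw [sum_range_pow]
  refine (PCong.sum (g := fun _ => 0) fun i hi => ?_).trans (.of_eq (by simp))
  rw [mem_range] at hi
  refine ⟨bernoulli i * (m + 1).choose i * p ^ (m - i) * ((m + 1 : ℕ) : ℚ)⁻¹, ?_, ?_⟩
  · exact mul_mem (mul_mem (mul_mem (bernoulli_mem_pIntegers (by omega)) (natCast_mem _ _))
      (pow_mem (natCast_mem _ p) _)) (inv_mem_pIntegers_of_lt (by omega) hm)
  · rw [show m + 1 - i = m - i + 1 by omega]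
    push_cast
    ring

theorem sum_pow_half_even (hpn : p = 2 * n + 1) (hp3 : 3 < p) {m : ℕ} (hm0 : 0 < m)
    (hme : Even m) (hm : m + 1 < p) : PCong p 1 (∑ j ∈ Icc 1 n, (j : ℚ) ^ m) 0 := by
  have h1 : ∑ k ∈ range p, (k : ℚ) ^ m = ∑ x ∈ Icc 1 (2 * n), (x : ℚ) ^ m := by
    rw [show range p = insert 0 (Icc 1 (2 * n)) by
      ext i; simp only [mem_range, mem_insert, mem_Icc]; omega, sum_insert (by simp)]
    simp [hm0.ne']
  have h2 : PCong p 1 (∑ x ∈ Icc 1 (2 * n), (x : ℚ) ^ m) (2 * ∑ j ∈ Icc 1 n, (j : ℚ) ^ m) := by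
    rw [sum_Icc_two_mul_fold, mul_sum]
    refine PCong.sum fun j hj => ?_
    rw [mem_Icc] at hj
    rw [← hpn, Nat.cast_sub (by omega), two_mul]
    refine (PCong.of_eq rfl).add ?_
    rw [← hme.neg_pow (j : ℚ)]
    exact PCong.pow (sub_mem (natCast_mem _ _) (natCast_mem _ _)) (neg_mem (natCast_mem _ _))
      ⟨1, one_mem _, by ring⟩ m
  have h3 := (h2.symm.trans ((PCong.of_eq h1.symm).trans (sum_pow_full hm))).mul_left
    (two_inv_mem_pIntegers hp3)
  simpa using h3

theorem genHarmonic_three_pcong_sum_pow (hpn : p = 2 * n + 1) (hp3 : 3 < p) :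
    PCong p 1 (genHarmonic 3 n) (∑ j ∈ Icc 1 n, (j : ℚ) ^ (p - 4)) := by
  refine PCong.sum fun j hj => ?_
  rw [mem_Icc] at hj
  exact pcong_inv_pow hj.1 (by omega) (by omega)

theorem bernoulli_eval_half (k : ℕ) :
    (Polynomial.bernoulli k).eval (2⁻¹ : ℚ) = (2 / 2 ^ k - 1) * bernoulli k := by
  have h := bernoulliFun_eval_half k
  rw [bernoulliFun, show (2⁻¹ : ℝ) = algebraMap ℚ ℝ 2⁻¹ by simp, Polynomial.eval_map_algebraMap,
    Polynomial.aeval_algebraMap_apply] at h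
  simp only [eq_ratCast, Polynomial.coe_aeval_eq_eval] at h
  have h' : (((Polynomial.bernoulli k).eval (2⁻¹ : ℚ) : ℚ) : ℝ) =
      (((2 / 2 ^ k - 1) * bernoulli k : ℚ) : ℝ) := by
    push_cast
    exact h
  exact Rat.cast_injective h'

theorem genHarmonic_three_half (hpn : p = 2 * n + 1) (hp3 : 3 < p) :
    PCong p 1 (genHarmonic 3 n) (-2 * bernoulli (p - 3)) := by
  have h2 := two_inv_mem_pIntegers hp3
  have hB : bernoulli (p - 3) ∈ pIntegers p := bernoulli_mem_pIntegers (by omega)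
  have h1 : ∑ j ∈ Icc 1 n, (j : ℚ) ^ (p - 4) = ∑ k ∈ range (n + 1), (k : ℚ) ^ (p - 4) := by
    rw [show range (n + 1) = insert 0 (Icc 1 n) by
      ext i; simp only [mem_range, mem_insert, mem_Icc]; omega, sum_insert (by simp)]
    simp [show p - 4 ≠ 0 by omega]
  have h3 := Polynomial.sum_range_pow_eq_bernoulli_sub (n + 1) (p - 4)
  rw [← h1, show (p - 4).succ = p - 3 by omega, Nat.cast_sub (by omega)] at h3
  have h4 : PCong p 1 ((Polynomial.bernoulli (p - 3)).eval ((n + 1 : ℕ) : ℚ))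
      ((Polynomial.bernoulli (p - 3)).eval (2⁻¹ : ℚ)) := by
    simp only [Polynomial.bernoulli, Polynomial.eval_finsetSum, Polynomial.eval_monomial]
    refine PCong.sum fun i hi => ?_
    rw [mem_range] at hi
    refine PCong.mul_left (mul_mem (bernoulli_mem_pIntegers (by omega)) (natCast_mem _ _))
      (PCong.pow (natCast_mem _ _) h2 ⟨2⁻¹, h2, ?_⟩ _)
    rw [hpn]
    push_cast
    ring
  rw [bernoulli_eval_half] at h4
  obtain ⟨a, ha, h4⟩ := h4
  obtain ⟨b, hb, h5⟩ := pcong_inv_pow (p := p) (x := 2) (a := p - 3) (b := 2) (by omega) (by omega)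
    (by omega)
  obtain ⟨c, hc, h6⟩ := genHarmonic_three_pcong_sum_pow hpn hp3
  set S := ∑ j ∈ Icc 1 n, (j : ℚ) ^ (p - 4)
  have hSm : S ∈ pIntegers p := sum_mem fun j _ => pow_mem (natCast_mem _ _) _
  push_cast at h3 h4 h5
  rw [h4, div_eq_mul_inv, h5] at h3
  refine ⟨c + 3⁻¹ * (S - 2 * b * bernoulli (p - 3) - a), ?_, ?_⟩
  · exact add_mem hc (mul_mem (three_inv_mem_pIntegers hp3) (sub_mem (sub_mem hSm
      (mul_mem (mul_mem (ofNat_mem _ 2) hb) hB)) ha))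
  · rw [h6]
    linear_combination -(1 / 3) * h3

theorem sum_inv_mul_sum_pow (hpn : p = 2 * n + 1) (hp3 : 3 < p) :
    PCong p 1 (∑ j ∈ Icc 1 n, (j : ℚ)⁻¹ * ∑ i ∈ range j, (i : ℚ) ^ (p - 3))
      (bernoulli (p - 3) * n - 2⁻¹ * genHarmonic 3 n) := by
  have h1 : ∑ j ∈ Icc 1 n, (j : ℚ)⁻¹ * ∑ i ∈ range j, (i : ℚ) ^ (p - 3) =
      ∑ k ∈ range (p - 2), bernoulli k * (p - 2).choose k * ((p - 2 : ℕ) : ℚ)⁻¹ *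
        ∑ j ∈ Icc 1 n, (j : ℚ) ^ (p - 3 - k) := by
    simp_rw [sum_range_pow, mul_sum]
    rw [sum_comm, show p - 3 + 1 = p - 2 by omega]
    refine sum_congr rfl fun k hk => sum_congr rfl fun j hj => ?_
    rw [mem_range] at hk
    rw [mem_Icc] at hj
    have hj0 : (j : ℚ) ≠ 0 := by have : 0 < j := hj.1; positivity
    rw [show p - 2 - k = p - 3 - k + 1 by omega, pow_succ,
      show ((p - 3 : ℕ) : ℚ) + 1 = (p - 2 : ℕ) by
        rw [← Nat.cast_add_one, show p - 3 + 1 = p - 2 by omega]]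
    field_simp
  have h2 : bernoulli (p - 3) * n - 2⁻¹ * genHarmonic 3 n = ∑ k ∈ range (p - 2),
      ((if k = p - 3 then bernoulli (p - 3) * n else 0) +
        (if k = 1 then -2⁻¹ * genHarmonic 3 n else 0)) := by
    rw [sum_add_distrib, sum_ite_eq', sum_ite_eq', if_pos (by rw [mem_range]; omega),
      if_pos (by rw [mem_range]; omega)]
    ring
  have hinv := inv_mem_pIntegers_of_lt (p := p) (x := p - 2) (by omega) (by omega)
  have hne : ((p - 2 : ℕ) : ℚ) ≠ 0 := by
    have : 0 < p - 2 := by omega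
    positivity
  rw [h1, h2]
  refine PCong.sum fun k hk => ?_
  rw [mem_range] at hk
  by_cases hk3 : k = p - 3
  · subst hk3
    rw [if_pos rfl, if_neg (by omega), add_zero]
    refine .of_eq ?_
    have : (p - 2).choose (p - 3) = p - 2 := by
      rw [show p - 2 = p - 3 + 1 by omega, Nat.choose_succ_self_right]
    rw [this]
    simp [hne]
  by_cases hk1 : k = 1
  · subst hk1
    rw [if_neg hk3, if_pos rfl, zero_add, Nat.choose_one_right, bernoulli_one,
      mul_assoc (-1 / 2 : ℚ), mul_inv_cancel₀ hne, mul_one, show p - 3 - 1 = p - 4 by omega]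
    refine PCong.trans (.of_eq (by ring)) ((genHarmonic_three_pcong_sum_pow hpn hp3).symm.mul_left
      (neg_mem (two_inv_mem_pIntegers hp3)))
  rw [if_neg hk3, if_neg hk1, add_zero]
  rcases Nat.even_or_odd k with hke | hko
  · have h3 := sum_pow_half_even hpn hp3 (m := p - 3 - k) (by omega)
      (by rw [Nat.even_iff] at *; omega) (by omega)
    have h4 := h3.mul_left (mul_mem (mul_mem (bernoulli_mem_pIntegers (p := p) (k := k) (by omega))
      (natCast_mem _ ((p - 2).choose k))) hinv)
    rwa [mul_zero] at h4
  · rw [bernoulli_eq_zero_of_odd hko (by have := hko.pos; omega)]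
    exact .of_eq (by simp)

theorem sum_inv_sq_mul_harmonic (hpn : p = 2 * n + 1) (hp3 : 3 < p) :
    PCong p 1 (∑ i ∈ Icc 1 n, ((i : ℚ) ^ 2)⁻¹ * harmonic i) (-bernoulli (p - 3) / 2) := by
  have h1 : ∑ i ∈ Icc 1 n, ((i : ℚ) ^ 2)⁻¹ * harmonic i = genHarmonic 2 n * harmonic n -
      ∑ j ∈ Icc 1 n, (j : ℚ)⁻¹ * ∑ i ∈ range j, ((i : ℚ) ^ 2)⁻¹ := by
    simp_rw [harmonic_eq_sum_Icc]
    rw [← sum_Icc_mul_sum_Icc_ge, mul_sum, ← sum_sub_distrib]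
    refine sum_congr rfl fun j hj => ?_
    rw [mem_Icc] at hj
    have h2 : genHarmonic 2 n =
        ∑ i ∈ range j, ((i : ℚ) ^ 2)⁻¹ + ∑ i ∈ Icc j n, ((i : ℚ) ^ 2)⁻¹ := by
      rw [← sum_union (by rw [disjoint_left]; intro i; simp only [mem_range, mem_Icc]; omega),
        show range j ∪ Icc j n = insert 0 (Icc 1 n) by
          ext i; simp only [mem_range, mem_union, mem_insert, mem_Icc]; omega,
        sum_insert (by simp)]
      simp [genHarmonic]
    rw [h2]
    ring
  have h3 : PCong p 1 (∑ j ∈ Icc 1 n, (j : ℚ)⁻¹ * ∑ i ∈ range j, ((i : ℚ) ^ 2)⁻¹)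
      (∑ j ∈ Icc 1 n, (j : ℚ)⁻¹ * ∑ i ∈ range j, (i : ℚ) ^ (p - 3)) := by
    refine PCong.sum fun j hj => ?_
    rw [mem_Icc] at hj
    refine PCong.mul_left (inv_mem_pIntegers_of_lt (by omega) (by omega)) (PCong.sum fun i hi => ?_)
    rw [mem_range] at hi
    rcases Nat.eq_zero_or_pos i with rfl | hi0
    · exact .of_eq (by simp [show p - 3 ≠ 0 by omega])
    · exact pcong_inv_pow hi0 (by omega) (by omega)
  obtain ⟨a, ha, h4⟩ := h3.trans (sum_inv_mul_sum_pow hpn hp3)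
  obtain ⟨b, hb, h5⟩ := genHarmonic_two_half_one hpn hp3
  obtain ⟨c, hc, h6⟩ := genHarmonic_three_half hpn hp3
  have h2 := two_inv_mem_pIntegers hp3
  have hB : bernoulli (p - 3) ∈ pIntegers p := bernoulli_mem_pIntegers (by omega)
  have h7 : (n : ℚ) = (p - 1) / 2 := by rw [hpn]; push_cast; ring
  rw [h1, h4, h5, h6, h7]
  refine ⟨b * harmonic n - bernoulli (p - 3) * 2⁻¹ + c * 2⁻¹ - a, ?_, by ring⟩
  exact sub_mem (add_mem (sub_mem (mul_mem hb (harmonic_mem_pIntegers (by omega)))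
    (mul_mem hB h2)) (mul_mem hc h2)) ha

end BernoulliNumbers

theorem summand_eq {p n k : ℕ} (hpn : p = 2 * n + 1) (hk0 : 1 ≤ k) (hk : k ≤ n) :
    ((p : ℚ) / 2 - k) * harmonic (2 * k) / (((p : ℚ) + 1 - 2 * k) * ((p : ℚ) + 2 * k)) =
      (2 * p * (((p : ℚ) + (2 * k : ℕ))⁻¹ * harmonic (2 * k)) -
        ((2 * (n + 1 - k) : ℕ) : ℚ)⁻¹ * harmonic (2 * k)) / (2 * (2 * p + 1)) := by
  have h1 : ((2 * (n + 1 - k) : ℕ) : ℚ) = p + 1 - 2 * k := by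
    rw [hpn]
    push_cast [Nat.cast_sub (show k ≤ n + 1 by omega)]
    ring
  have h2 : (p : ℚ) + 1 - 2 * k ≠ 0 := by
    rw [← h1]
    exact_mod_cast (show 2 * (n + 1 - k) ≠ 0 by omega)
  have h3 : (p : ℚ) + 2 * k ≠ 0 := by positivity
  have h4 : 2 * (p : ℚ) + 1 ≠ 0 := by positivity
  rw [h1]
  push_cast
  field_simp
  ring

theorem sum_inv_add_mul_harmonic_two_mul {p n : ℕ} [Fact p.Prime] (hpn : p = 2 * n + 1)
    (hp3 : 3 < p) :
    PCong p 1 (∑ k ∈ Icc 1 n, ((p : ℚ) + (2 * k : ℕ))⁻¹ * harmonic (2 * k))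
      (harmonic n ^ 2 / 8) := by
  refine PCong.trans (PCong.sum fun k hk => ?_) (sum_inv_mul_harmonic_two_mul hpn hp3)
  rw [mem_Icc] at hk
  have h1 := inv_mem_pIntegers_of_lt (p := p) (x := 2 * k) (by omega) (by omega)
  have h2 : ((p : ℚ) + (2 * k : ℕ))⁻¹ ∈ pIntegers p := by
    have := natCast_inv_mem_pIntegers (p := p) (k := p + 2 * k) (by
      rw [Nat.dvd_add_right dvd_rfl]
      exact Nat.not_dvd_of_pos_of_lt (by omega) (by omega))
    rwa [Nat.cast_add] at this
  have h3 : ((2 * k : ℕ) : ℚ) ≠ 0 := by exact_mod_cast (show 2 * k ≠ 0 by omega)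
  have h4 : (p : ℚ) + (2 * k : ℕ) ≠ 0 := by positivity
  refine ⟨-(((p : ℚ) + (2 * k : ℕ))⁻¹ * ((2 * k : ℕ) : ℚ)⁻¹ * harmonic (2 * k)), ?_, ?_⟩
  · exact neg_mem (mul_mem (mul_mem h2 h1) (harmonic_mem_pIntegers (by omega)))
  · field_simp
    ring

theorem sum_harmonic_two_mul_reflect_fermatQ {p n : ℕ} [Fact p.Prime] (hpn : p = 2 * n + 1)
    (hp3 : 3 < p) :
    PCong p 2 (∑ j ∈ Icc 1 n, ((2 * j : ℕ) : ℚ)⁻¹ * harmonic (2 * (n + 1 - j)))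
      (fermatQ p ^ 2 / 2 - 2 * fermatQ p + p * (-fermatQ p ^ 3 / 2 + fermatQ p ^ 2 +
        2 * fermatQ p - 13 / 16 * bernoulli (p - 3))) := by
  have hp1 : (p : ℚ) + 1 ≠ 0 := by positivity
  have mp := natCast_mem (pIntegers p) p
  have m2 := two_inv_mem_pIntegers hp3
  have mq := fermatQ_mem_pIntegers hpn hp3
  have mH := harmonic_mem_pIntegers (p := p) (m := n) (by omega)
  have mu : ((p : ℚ) + 1)⁻¹ ∈ pIntegers p := by
    have := natCast_inv_mem_pIntegers (p := p) (k := p + 1) (by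
      rw [Nat.dvd_add_right dvd_rfl]
      exact Nat.not_dvd_of_pos_of_lt (by omega) (by omega))
    exact_mod_cast this
  obtain ⟨b, hb, h2⟩ := sum_harmonic_two_mul_reflect hpn hp3
  obtain ⟨c, hc, h3⟩ := genHarmonic_two_half hpn hp3
  obtain ⟨d, hd, h4⟩ := genHarmonic_three_half hpn hp3
  obtain ⟨e, he, h5⟩ := sum_inv_sq_mul_harmonic hpn hp3
  obtain ⟨f, hf, h6⟩ := harmonic_half hpn hp3
  rw [h2, h3, h4, h5]
  generalize fermatQ p = q at *
  refine ⟨b + (q ^ 4 - 4 * q * f + 2 * p * q ^ 2 * f + p ^ 2 * f ^ 2) * 2⁻¹ ^ 3 +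
    (f - q ^ 2 - p * f) + harmonic n * ((p : ℚ) + 1)⁻¹ + 7 * 2⁻¹ ^ 4 * d - 3 * 2⁻¹ ^ 3 * c -
    e * 2⁻¹ ^ 3, ?_, ?_⟩
  · repeat' first | assumption | apply ofNat_mem | apply sub_mem | apply add_mem | apply mul_mem |
      apply pow_mem
  · have h7 : harmonic n / ((p : ℚ) + 1) =
        harmonic n * (1 - p) + p ^ 2 * (harmonic n * ((p : ℚ) + 1)⁻¹) := by
      field_simp
      ring
    rw [h7]
    generalize ((p : ℚ) + 1)⁻¹ = u
    rw [h6]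
    ring

theorem sum_H2k_congr (p : ℕ) (hp : p.Prime) (hp3 : 3 < p) :
    ratCongr p 2
      (∑ k ∈ Finset.Icc 1 ((p - 1) / 2),
        ((p : ℚ) / 2 - k) * harmonic (2 * k) / (((p : ℚ) + 1 - 2 * k) * ((p : ℚ) + 2 * k)))
      (fermatQ p - (1 / 4) * fermatQ p ^ 2 - 3 * p * fermatQ p + ((p : ℚ) / 2) * fermatQ p ^ 2 +
        ((p : ℚ) / 4) * fermatQ p ^ 3 + (13 / 32) * p * bernoulli (p - 3)) := by
  have : Fact p.Prime := ⟨hp⟩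
  apply PCong.ratCongr
  obtain ⟨n, hpn⟩ := hp.odd_of_ne_two (by omega)
  rw [show (p - 1) / 2 = n by omega]
  have hsum : ∑ k ∈ Icc 1 n,
      ((p : ℚ) / 2 - k) * harmonic (2 * k) / (((p : ℚ) + 1 - 2 * k) * ((p : ℚ) + 2 * k)) =
      (2 * p * (∑ k ∈ Icc 1 n, ((p : ℚ) + (2 * k : ℕ))⁻¹ * harmonic (2 * k)) -
        ∑ j ∈ Icc 1 n, ((2 * j : ℕ) : ℚ)⁻¹ * harmonic (2 * (n + 1 - j))) / (2 * (2 * p + 1)) := by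
    have hrefl : ∑ j ∈ Icc 1 n, ((2 * j : ℕ) : ℚ)⁻¹ * harmonic (2 * (n + 1 - j)) =
        ∑ k ∈ Icc 1 n, ((2 * (n + 1 - k) : ℕ) : ℚ)⁻¹ * harmonic (2 * k) := by
      refine sum_nbij' (fun i => n + 1 - i) (fun i => n + 1 - i) ?_ ?_ ?_ ?_ ?_ <;>
        simp only [mem_Icc] <;> intro i hi
      any_goals omega
      rw [show n + 1 - (n + 1 - i) = i by omega]
    rw [hrefl, mul_sum, ← sum_sub_distrib, sum_div]
    refine sum_congr rfl fun k hk => ?_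
    rw [mem_Icc] at hk
    exact summand_eq hpn hk.1 hk.2
  have h2p1 : 2 * (p : ℚ) + 1 ≠ 0 := by positivity
  have mp := natCast_mem (pIntegers p) p
  have m2 := two_inv_mem_pIntegers hp3
  have mq := fermatQ_mem_pIntegers hpn hp3
  have mB : bernoulli (p - 3) ∈ pIntegers p := bernoulli_mem_pIntegers (by omega)
  have mv : (2 * (p : ℚ) + 1)⁻¹ ∈ pIntegers p := by
    have := natCast_inv_mem_pIntegers (p := p) (k := 2 * p + 1) (by
      rw [Nat.dvd_add_right (Dvd.intro_left _ rfl)]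
      exact Nat.not_dvd_of_pos_of_lt (by omega) (by omega))
    exact_mod_cast this
  obtain ⟨a, ha, h1⟩ := sum_inv_add_mul_harmonic_two_mul hpn hp3
  obtain ⟨t, ht, h2⟩ := sum_harmonic_two_mul_reflect_fermatQ hpn hp3
  obtain ⟨f, hf, h3⟩ := harmonic_half hpn hp3
  rw [hsum, h1, h2, h3]
  generalize fermatQ p = q at *
  generalize bernoulli (p - 3) = B at *
  obtain ⟨w, hw, hN⟩ : ∃ w ∈ pIntegers p,
      2 * p * ((-2 * q + p * q ^ 2 + p ^ 2 * f) ^ 2 / 8 + p ^ 1 * a) -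
        (q ^ 2 / 2 - 2 * q + p * (-q ^ 3 / 2 + q ^ 2 + 2 * q - 13 / 16 * B) + p ^ 2 * t) =
      2 * q - q ^ 2 * 2⁻¹ + p * (q ^ 3 * 2⁻¹ - 2 * q + 13 * 2⁻¹ ^ 4 * B) + p ^ 2 * w := by
    refine ⟨2 * ((-4 * q ^ 3 + p * (q ^ 4 - 4 * q * f + 2 * p * q ^ 2 * f + p ^ 2 * f ^ 2)) *
      2⁻¹ ^ 3 + a) - t, ?_, by ring⟩
    repeat' first | assumption | apply ofNat_mem | apply sub_mem | apply add_mem | apply mul_mem |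
      apply pow_mem | apply neg_mem
  rw [hN]
  set N := 2 * q - q ^ 2 * 2⁻¹ + p * (q ^ 3 * 2⁻¹ - 2 * q + 13 * 2⁻¹ ^ 4 * B) + p ^ 2 * w with hNdef
  have mN : N ∈ pIntegers p := by
    repeat' first | assumption | apply ofNat_mem | apply sub_mem | apply add_mem | apply mul_mem |
      apply pow_mem
  have hdiv : N / (2 * (2 * p + 1)) =
      N * (1 - 2 * p) * 2⁻¹ + p ^ 2 * (2 * N * (2 * (p : ℚ) + 1)⁻¹) := by
    field_simp
    ring
  refine ⟨(w - 2 * (q ^ 3 * 2⁻¹ - 2 * q + 13 * 2⁻¹ ^ 4 * B) - 2 * p * w) * 2⁻¹ +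
    2 * N * (2 * (p : ℚ) + 1)⁻¹, ?_, ?_⟩
  · repeat' first | assumption | apply ofNat_mem | apply sub_mem | apply add_mem | apply mul_mem |
      apply pow_mem
  · rw [hdiv]
    generalize (2 * (p : ℚ) + 1)⁻¹ = v
    rw [hNdef]
    ring
end

section
/- Let p > 3 be a prime. Then ∑_{k=1}^{(p-1)/2} (p/2 - k)·H_k^2/((p+1-2k)(p+2k)) ≡ 4·q_p(2) - 6·q_p(2)^2 + 2·q_p(2)^3 + (1/8)·B_{p-3} modulo p (as rational numbers). -/
open Finset
open scoped Polynomial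

/-- The rational `a` is `p`-integral and its residue class modulo `p` is `z`. -/
def HasResidue (p : ℕ) (a : ℚ) (z : ZMod p) : Prop :=
  ∃ u v : ℤ, (v : ZMod p) ≠ 0 ∧ a * v = u ∧ z * v = u

namespace HasResidue

variable {p : ℕ} {a b : ℚ} {y z : ZMod p}

theorem intCast [Fact p.Prime] (n : ℤ) : HasResidue p n n :=
  ⟨n, 1, by simp, by simp, by simp⟩

theorem natCast [Fact p.Prime] (n : ℕ) : HasResidue p n n := by
  simpa using intCast (p := p) n

theorem one [Fact p.Prime] : HasResidue p 1 1 := by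
  simpa using natCast (p := p) 1

theorem add [Fact p.Prime] (ha : HasResidue p a y) (hb : HasResidue p b z) :
    HasResidue p (a + b) (y + z) := by
  obtain ⟨u, v, hv, h1, h2⟩ := ha
  obtain ⟨u', v', hv', h1', h2'⟩ := hb
  refine ⟨u * v' + u' * v, v * v', by simp [hv, hv'], ?_, ?_⟩ <;> push_cast
  · linear_combination (v' : ℚ) * h1 + v * h1'
  · linear_combination (v' : ZMod p) * h2 + v * h2'

theorem mul [Fact p.Prime] (ha : HasResidue p a y) (hb : HasResidue p b z) :
    HasResidue p (a * b) (y * z) := by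
  obtain ⟨u, v, hv, h1, h2⟩ := ha
  obtain ⟨u', v', hv', h1', h2'⟩ := hb
  refine ⟨u * u', v * v', by simp [hv, hv'], ?_, ?_⟩ <;> push_cast
  · rw [← h1, ← h1']; ring
  · rw [← h2, ← h2']; ring

theorem neg (ha : HasResidue p a y) : HasResidue p (-a) (-y) := by
  obtain ⟨u, v, hv, h1, h2⟩ := ha
  exact ⟨-u, v, hv, by simp [h1], by simp [h2]⟩

theorem sub [Fact p.Prime] (ha : HasResidue p a y) (hb : HasResidue p b z) :
    HasResidue p (a - b) (y - z) := by
  simpa [sub_eq_add_neg] using ha.add hb.neg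

theorem pow [Fact p.Prime] (ha : HasResidue p a y) (n : ℕ) :
    HasResidue p (a ^ n) (y ^ n) := by
  induction n with
  | zero => simpa using one
  | succ n ih => simpa [pow_succ] using ih.mul ha

theorem inv [Fact p.Prime] (ha : HasResidue p a y) (hy : y ≠ 0) :
    HasResidue p a⁻¹ y⁻¹ := by
  obtain ⟨u, v, hv, h1, h2⟩ := ha
  have hu : (u : ZMod p) ≠ 0 := by rw [← h2]; exact mul_ne_zero hy hv
  have ha0 : a ≠ 0 := by
    rintro rfl
    apply hu
    have : u = 0 := by exact_mod_cast (by simpa using h1.symm : (u : ℚ) = 0)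
    simp [this]
  refine ⟨v, u, hu, ?_, ?_⟩
  · rw [← h1]; field_simp
  · rw [← h2]; field_simp

theorem div [Fact p.Prime] (ha : HasResidue p a y) (hb : HasResidue p b z) (hz : z ≠ 0) :
    HasResidue p (a / b) (y / z) := by
  simpa [div_eq_mul_inv] using ha.mul (hb.inv hz)

theorem sum [Fact p.Prime] {ι : Type*} (s : Finset ι) {f : ι → ℚ} {g : ι → ZMod p}
    (h : ∀ i ∈ s, HasResidue p (f i) (g i)) : HasResidue p (∑ i ∈ s, f i) (∑ i ∈ s, g i) := by
  classical
  induction s using Finset.induction_on with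
  | empty => simpa using natCast (p := p) 0
  | insert i s hi ih =>
    rw [sum_insert hi, sum_insert hi]
    exact (h i (mem_insert_self i s)).add (ih fun j hj => h j (mem_insert_of_mem hj))

theorem unique [Fact p.Prime] (h : HasResidue p a y) (h' : HasResidue p a z) : y = z := by
  obtain ⟨u, v, hv, h1, h2⟩ := h
  obtain ⟨u', v', hv', h1', h2'⟩ := h'
  have key : u * v' = u' * v := by
    have : (u : ℚ) * v' = u' * v := by rw [← h1, ← h1']; ring
    exact_mod_cast this
  have key' : (u : ZMod p) * v' = u' * v := by exact_mod_cast congrArg (Int.cast : ℤ → ZMod p) key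
  rw [← h2, ← h2'] at key'
  exact mul_right_cancel₀ (mul_ne_zero hv hv') (by linear_combination key')

theorem ratCongr_one [Fact p.Prime] (ha : HasResidue p a z) (hb : HasResidue p b z) :
    ratCongr p 1 a b := by
  obtain ⟨u, v, hv, h1, h2⟩ := ha.sub hb
  rw [sub_self, zero_mul, eq_comm, ZMod.intCast_zmod_eq_zero_iff_dvd] at h2
  obtain ⟨w, rfl⟩ := h2
  have hv0 : (v : ℚ) ≠ 0 := by
    intro h
    have : v = 0 := by exact_mod_cast h
    simp [this] at hv
  refine ⟨w / v, ?_, fun hd => hv ?_⟩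
  · push_cast at h1
    field_simp
    linear_combination h1
  · have h3 : ((w / v : ℚ).den : ℤ) ∣ v := by
      simpa [Rat.divInt_eq_div] using Rat.den_dvd w v
    rw [ZMod.intCast_zmod_eq_zero_iff_dvd]
    exact (Int.natCast_dvd_natCast.2 hd).trans h3

end HasResidue

section Bernoulli

variable {p : ℕ} [Fact p.Prime]

theorem natCast_ne_zero_of_lt {m : ℕ} (h0 : 0 < m) (hm : m < p) : (m : ZMod p) ≠ 0 := by
  rw [Ne, ZMod.natCast_eq_zero_iff]
  exact Nat.not_dvd_of_pos_of_lt h0 hm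

theorem two_ne_zero_zmod (hp : 3 < p) : (2 : ZMod p) ≠ 0 := by
  simpa using natCast_ne_zero_of_lt (p := p) (m := 2) (by omega) (by omega)

theorem exists_hasResidue_bernoulli {n : ℕ} (hn : n + 1 < p) :
    ∃ z, HasResidue p (bernoulli n) z := by
  induction n using Nat.strong_induction_on with
  | _ n ih =>
    have hsum := sum_bernoulli (n + 1)
    rw [sum_range_succ, Nat.choose_succ_self_right] at hsum
    choose! z hz using fun j (hj : j < n) => ih j hj (by omega)
    have h1 : HasResidue p (∑ k ∈ range n, ((n + 1).choose k : ℚ) * bernoulli k)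
        (∑ k ∈ range n, ((n + 1).choose k : ZMod p) * z k) :=
      HasResidue.sum _ fun k hk => (HasResidue.natCast _).mul (hz k (mem_range.1 hk))
    have h2 : HasResidue p (if n + 1 = 1 then 1 else 0 : ℚ) (if n + 1 = 1 then 1 else 0) := by
      split_ifs
      · exact .one
      · simpa using HasResidue.natCast (p := p) 0
    have hne : ((n + 1 : ℕ) : ZMod p) ≠ 0 := natCast_ne_zero_of_lt n.succ_pos hn
    have h3 := (h2.sub h1).div (HasResidue.natCast (n + 1)) hne
    have hne' : ((n + 1 : ℕ) : ℚ) ≠ 0 := by positivity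
    rw [← hsum, add_sub_cancel_left, mul_div_cancel_left₀ _ hne'] at h3
    exact ⟨_, h3⟩

theorem sum_range_pow_zmod {b : ℕ → ZMod p}
    (hb : ∀ j, j + 1 < p → HasResidue p (bernoulli j) (b j)) {r : ℕ} (hr : r + 1 < p) (n : ℕ) :
    ∑ k ∈ range n, (k : ZMod p) ^ r =
      (∑ i ∈ range (r + 1), b i * ((r + 1).choose i : ZMod p) * (n : ZMod p) ^ (r + 1 - i)) /
        (r + 1 : ℕ) := by
  have h1 : HasResidue p (∑ k ∈ range n, (k : ℚ) ^ r) (∑ k ∈ range n, (k : ZMod p) ^ r) :=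
    HasResidue.sum _ fun k _ => (HasResidue.natCast k).pow r
  refine h1.unique ?_
  rw [sum_range_pow, ← sum_div]
  have := natCast_ne_zero_of_lt r.succ_pos hr
  refine HasResidue.div (HasResidue.sum _ fun i hi => ?_)
    (by simpa using HasResidue.natCast (p := p) (r + 1)) this
  exact ((hb i (by have := mem_range.1 hi; omega)).mul (HasResidue.natCast _)).mul
    ((HasResidue.natCast n).pow _)

theorem sum_bernoulli_mul_inv_two_pow (m : ℕ) :
    ∑ i ∈ range (m + 1), bernoulli i * (m.choose i : ℚ) * (2⁻¹ : ℚ) ^ (m - i) =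
      (2 / 2 ^ m - 1) * bernoulli m := by
  have h := bernoulliFun_eval_half m
  have h2 : bernoulliFun m 2⁻¹ = (((Polynomial.bernoulli m).eval (2⁻¹ : ℚ) : ℚ) : ℝ) := by
    have := Polynomial.eval₂_at_apply (p := Polynomial.bernoulli m) (algebraMap ℚ ℝ) 2⁻¹
    simpa [bernoulliFun, Polynomial.eval_map] using this
  rw [h2] at h
  have h3 : (Polynomial.bernoulli m).eval (2⁻¹ : ℚ) = (2 / 2 ^ m - 1) * bernoulli m := by
    refine Rat.cast_injective (α := ℝ) ?_
    push_cast
    exact h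
  rw [← h3, Polynomial.bernoulli, Polynomial.eval_finsetSum]
  simp [Polynomial.eval_monomial]

/-- `∑_{k ≤ (p-1)/2} 1/k³ ≡ -2 B_{p-3}`. -/
theorem sum_range_half_inv_cube (hp : 3 < p) {n : ℕ} (hn : p = 2 * n + 1) {b : ZMod p}
    (hb : HasResidue p (bernoulli (p - 3)) b) :
    ∑ k ∈ range (n + 1), ((k : ZMod p)⁻¹) ^ 3 = -2 * b := by
  choose! z hz using fun j (hj : j + 1 < p) => exists_hasResidue_bernoulli (p := p) hj
  obtain rfl : b = z (p - 3) := hb.unique (hz _ (by omega))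
  have hinv : ∀ k ∈ range (n + 1), ((k : ZMod p)⁻¹) ^ 3 = (k : ZMod p) ^ (p - 4) := by
    intro k hk
    rcases Nat.eq_zero_or_pos k with rfl | hk0
    · have : p - 4 ≠ 0 := by omega
      simp [this]
    · have hk' : (k : ZMod p) ≠ 0 := natCast_ne_zero_of_lt hk0 (by have := mem_range.1 hk; omega)
      have h1 := ZMod.pow_card_sub_one_eq_one hk'
      rw [show p - 1 = (p - 4) + 3 by omega, pow_add] at h1
      rw [inv_pow]
      exact inv_eq_of_mul_eq_one_left h1
  rw [sum_congr rfl hinv, sum_range_pow_zmod hz (by omega : p - 4 + 1 < p) (n + 1)]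
  have h2 : (2 : ZMod p) ≠ 0 := two_ne_zero_zmod hp
  have h3 : (3 : ZMod p) ≠ 0 := by
    simpa using natCast_ne_zero_of_lt (p := p) (m := 3) (by omega) (by omega)
  have hhalf : ((n + 1 : ℕ) : ZMod p) = 2⁻¹ := by
    have : ((p + 1 : ℕ) : ZMod p) = 2 * (n + 1 : ℕ) := by
      exact_mod_cast congrArg (Nat.cast : ℕ → ZMod p) (by omega : p + 1 = 2 * (n + 1))
    rw [Nat.cast_add, CharP.cast_eq_zero, zero_add, Nat.cast_one] at this
    exact (inv_eq_of_mul_eq_one_right this.symm).symm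
  have hp3 : ((p - 4 + 1 : ℕ) : ZMod p) = -3 := by
    rw [show p - 4 + 1 = p - 3 by omega, Nat.cast_sub (by omega)]; simp
  have h2pow : (2 : ZMod p) ^ (p - 4 + 1) = 4⁻¹ := by
    have h1 := ZMod.pow_card_sub_one_eq_one h2
    rw [show p - 1 = (p - 4 + 1) + 2 by omega, pow_add] at h1
    exact eq_inv_of_mul_eq_one_left (by linear_combination h1)
  have key : ∑ i ∈ range (p - 4 + 1 + 1), z i * ((p - 4 + 1).choose i : ZMod p) *
      (2⁻¹ : ZMod p) ^ (p - 4 + 1 - i) = (2 / 2 ^ (p - 4 + 1) - 1) * z (p - 4 + 1) := by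
    have two : HasResidue p 2 2 := by simpa using HasResidue.natCast (p := p) 2
    have hA : HasResidue p _ ((2 / 2 ^ (p - 4 + 1) - 1) * z (p - 4 + 1)) :=
      ((two.div (two.pow (p - 4 + 1)) (pow_ne_zero _ h2)).sub .one).mul (hz (p - 4 + 1) (by omega))
    rw [← sum_bernoulli_mul_inv_two_pow] at hA
    refine HasResidue.unique (HasResidue.sum _ fun i hi => ?_) hA
    exact ((hz i (by have := mem_range.1 hi; omega)).mul (.natCast _)).mul ((two.inv h2).pow _)
  rw [sum_range_succ, h2pow] at key
  simp only [Nat.choose_self, Nat.sub_self, pow_zero, Nat.cast_one, mul_one] at key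
  rw [hhalf, hp3, eq_sub_of_add_eq key, show p - 4 + 1 = p - 3 by omega]
  have h4 : (4 : ZMod p) ≠ 0 := by
    simpa using natCast_ne_zero_of_lt (p := p) (m := 4) (by omega) (by omega)
  field_simp
  ring

theorem sum_range_natCast_zmod (f : ZMod p → ZMod p) : ∑ m ∈ range p, f m = ∑ x, f x := by
  refine sum_nbij' (fun m => (m : ZMod p)) ZMod.val (by simp) ?_ ?_ (by simp) (by simp)
  · intro x _
    simpa using x.val_lt
  · intro m hm
    exact ZMod.val_cast_of_lt (mem_range.1 hm)

theorem sum_zmod_pow {i : ℕ} (hi : i ≠ 0) :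
    ∑ x : ZMod p, x ^ i = if p - 1 ∣ i then -1 else 0 := by
  classical
  have h := FiniteField.sum_pow_units (ZMod p) i
  rw [ZMod.card] at h
  rw [← h]
  let φ : (ZMod p)ˣ ↪ ZMod p := ⟨fun x => x, Units.val_injective⟩
  have hφ : univ.map φ = univ \ {0} := by
    ext x
    simpa only [mem_map, mem_univ, Function.Embedding.coeFn_mk, true_and, mem_sdiff,
      mem_singleton, φ] using! isUnit_iff_ne_zero
  calc
    ∑ x : ZMod p, x ^ i = ∑ x ∈ univ \ {(0 : ZMod p)}, x ^ i := by
      rw [← sum_sdiff ({0} : Finset (ZMod p)).subset_univ, sum_singleton, zero_pow hi, add_zero]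
    _ = ∑ x : (ZMod p)ˣ, (x ^ i : ZMod p) := by simp [φ, ← hφ, univ.sum_map φ]

/-- `∑_{j < k < p} 1/(j k²) ≡ B_{p-3}`. -/
theorem sum_range_harmonic_mul_inv_sq (hp : 3 < p) {b : ZMod p}
    (hb : HasResidue p (bernoulli (p - 3)) b) :
    ∑ k ∈ range p, (∑ j ∈ range k, (j : ZMod p)⁻¹) * ((k : ZMod p)⁻¹) ^ 2 = b := by
  choose! z hz using fun j (hj : j + 1 < p) => exists_hasResidue_bernoulli (p := p) hj
  obtain rfl : b = z (p - 3) := hb.unique (hz _ (by omega))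
  have hinv (x : ZMod p) : x⁻¹ = x ^ (p - 2) := by
    rcases eq_or_ne x 0 with rfl | hx
    · have : p - 2 ≠ 0 := by omega
      simp [this]
    · have h1 := ZMod.pow_card_sub_one_eq_one hx
      rw [show p - 1 = (p - 2) + 1 by omega, pow_succ] at h1
      exact inv_eq_of_mul_eq_one_left h1
  have hinv2 (x : ZMod p) : x⁻¹ ^ 2 = x ^ (p - 3) := by
    rcases eq_or_ne x 0 with rfl | hx
    · have : p - 3 ≠ 0 := by omega
      simp [this]
    · have h1 := ZMod.pow_card_sub_one_eq_one hx
      rw [show p - 1 = (p - 3) + 2 by omega, pow_add] at h1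
      rw [inv_pow]
      exact inv_eq_of_mul_eq_one_left h1
  have hsum (k : ℕ) : (∑ j ∈ range k, (j : ZMod p)⁻¹) * ((k : ZMod p)⁻¹) ^ 2 =
      ∑ i ∈ range (p - 1), -(z i * ((p - 1).choose i : ZMod p)) *
        (k : ZMod p) ^ (p - 1 - i + (p - 3)) := by
    rw [hinv2, sum_congr rfl fun (j : ℕ) _ => hinv (j : ZMod p),
      sum_range_pow_zmod hz (by omega : p - 2 + 1 < p) k, show p - 2 + 1 = p - 1 by omega,
      Nat.cast_sub (by omega), CharP.cast_eq_zero (ZMod p) p, Nat.cast_one, zero_sub, div_neg,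
      div_one, ← sum_neg_distrib, sum_mul]
    exact sum_congr rfl fun i _ => by rw [pow_add]; ring
  rw [sum_congr rfl fun k _ => hsum k, sum_comm]
  simp_rw [← mul_sum]
  have hpow : ∀ i ∈ range (p - 1), ∑ k ∈ range p, (k : ZMod p) ^ (p - 1 - i + (p - 3)) =
      if i = p - 3 then -1 else 0 := by
    intro i hi
    have hi' := mem_range.1 hi
    rw [sum_range_natCast_zmod (fun x => x ^ (p - 1 - i + (p - 3))), sum_zmod_pow (by omega)]
    refine if_congr ⟨fun h => ?_, fun h => ?_⟩ rfl rfl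
    · obtain ⟨c, hc⟩ := h
      have : c = 1 := by
        rcases c with _ | _ | c
        · omega
        · rfl
        · exfalso
          have : (p - 1) * (c + 1 + 1) = (p - 1) * c + (p - 1) + (p - 1) := by ring
          omega
      subst this
      omega
    · exact ⟨1, by omega⟩
  rw [sum_congr rfl fun i hi => by rw [hpow i hi], sum_eq_single (p - 3)]
  · have hc : ((p - 1).choose (p - 3) : ZMod p) = 1 := by
      have h2 : (2 : ZMod p) ≠ 0 := two_ne_zero_zmod hp
      have h1 : (p - 1).choose (p - 3) * 2 = (p - 1) * (p - 2) := by
        rw [← Nat.choose_symm (by omega), show p - 1 - (p - 3) = 2 by omega]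
        rw [Nat.choose_two_right, Nat.div_mul_cancel, show p - 1 - 1 = p - 2 by omega]
        exact (Nat.even_mul_pred_self (p - 1)).two_dvd
      have h3 := congrArg (Nat.cast : ℕ → ZMod p) h1
      rw [Nat.cast_mul, Nat.cast_mul, Nat.cast_sub (by omega),
        Nat.cast_sub (by omega : 2 ≤ p)] at h3
      simp only [CharP.cast_eq_zero, Nat.cast_one, Nat.cast_ofNat] at h3
      exact mul_right_cancel₀ h2 (by linear_combination h3)
    rw [hc]; simp
  · intro i _ hi; simp [hi]
  · intro h; exact absurd (mem_range.2 (by omega)) h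

end Bernoulli

section TruncatedPolylog

open Polynomial (C X derivative)

variable {p : ℕ}

/-- The nested sum `∑_{0 < i < m} f(i)/i` in `ZMod p`. -/
def invSum (p : ℕ) (f : ℕ → ZMod p) (m : ℕ) : ZMod p :=
  ∑ i ∈ range m, f i * (i : ZMod p)⁻¹

/-- The polynomial `∑_{0 < m < p} (f(m)/m) X^m` over `ZMod p`. -/
noncomputable def invPoly (p : ℕ) (f : ℕ → ZMod p) : (ZMod p)[X] :=
  ∑ m ∈ range p, C (f m * (m : ZMod p)⁻¹) * X ^ m

theorem natDegree_invPoly_le (f : ℕ → ZMod p) : (invPoly p f).natDegree ≤ p - 1 := by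
  refine Polynomial.natDegree_sum_le_of_forall_le _ _ fun m hm => ?_
  exact (Polynomial.natDegree_C_mul_X_pow_le _ _).trans (by have := mem_range.1 hm; omega)

variable [Fact p.Prime]

theorem invSum_succ (f : ℕ → ZMod p) (m : ℕ) :
    invSum p f (m + 1) = invSum p f m + f m * (m : ZMod p)⁻¹ :=
  sum_range_succ _ _

theorem eval_invPoly (f : ℕ → ZMod p) (x : ZMod p) :
    (invPoly p f).eval x = ∑ m ∈ range p, f m * (m : ZMod p)⁻¹ * x ^ m := by
  simp [invPoly, Polynomial.eval_finsetSum]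

theorem eval_one_invPoly (f : ℕ → ZMod p) : (invPoly p f).eval 1 = invSum p f p := by
  simp [eval_invPoly, invSum]

theorem coeff_invPoly (f : ℕ → ZMod p) (m : ℕ) :
    (invPoly p f).coeff m = if m < p then f m * (m : ZMod p)⁻¹ else 0 := by
  rw [invPoly, Polynomial.finsetSum_coeff]
  simp only [Polynomial.coeff_C_mul_X_pow]
  simp

theorem coeff_zero_invPoly (f : ℕ → ZMod p) : (invPoly p f).coeff 0 = 0 := by
  simp [coeff_invPoly]

theorem eval_zero_invPoly (f : ℕ → ZMod p) : (invPoly p f).eval 0 = 0 := by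
  rw [← Polynomial.coeff_zero_eq_eval_zero, coeff_zero_invPoly]

theorem sum_range_eq_sum_range_pred_add {M : Type*} [AddCommMonoid M] {n : ℕ} (hn : 1 ≤ n)
    (f : ℕ → M) : ∑ m ∈ range n, f m = ∑ m ∈ range (n - 1), f (m + 1) + f 0 := by
  obtain ⟨k, rfl⟩ := Nat.exists_eq_add_of_le' hn
  exact sum_range_succ' f k

theorem derivative_invPoly (f : ℕ → ZMod p) :
    derivative (invPoly p f) =
      ∑ m ∈ range (p - 1), C (f (m + 1)) * X ^ m := by
  have hp := (Fact.out : p.Prime).one_lt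
  rw [invPoly, sum_range_eq_sum_range_pred_add hp.le, Polynomial.derivative_add,
    Polynomial.derivative_sum]
  simp only [Polynomial.derivative_C_mul_X_pow, Nat.add_sub_cancel]
  simp only [Nat.cast_zero, mul_zero, map_zero, zero_mul, add_zero]
  refine sum_congr rfl fun m hm => ?_
  rw [mul_assoc, inv_mul_cancel₀, mul_one]
  exact natCast_ne_zero_of_lt m.succ_pos (by have := mem_range.1 hm; omega)

theorem X_mul_derivative_invPoly (f : ℕ → ZMod p) :
    X * derivative (invPoly p fun m => f m * (m : ZMod p)⁻¹) =
      invPoly p f := by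
  have hp := (Fact.out : p.Prime).one_lt
  rw [derivative_invPoly, invPoly, sum_range_eq_sum_range_pred_add hp.le, mul_sum]
  simp only [Nat.cast_zero, inv_zero, mul_zero, map_zero, zero_mul, add_zero]
  exact sum_congr rfl fun m _ => by ring

theorem one_sub_X_mul_derivative_invPoly {f : ℕ → ZMod p} (hf : invSum p f p = 0) :
    (1 - X) * derivative (invPoly p (invSum p f)) = invPoly p f := by
  have key (N : ℕ) : (1 - X) *
      ∑ m ∈ range N, C (invSum p f (m + 1)) * X ^ m =
      ∑ m ∈ range (N + 1), C (f m * (m : ZMod p)⁻¹) * X ^ m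
        - C (invSum p f (N + 1)) * X ^ N := by
    induction N with
    | zero => simp [invSum]
    | succ N ih =>
      rw [sum_range_succ, mul_add, ih, sum_range_succ _ (N + 1), invSum_succ f (N + 1), map_add]
      ring
  have hp := (Fact.out : p.Prime).one_lt
  rw [derivative_invPoly, key, show p - 1 + 1 = p by omega, hf]
  simp [invPoly]

theorem one_sub_X_mul_derivative_invPoly_one :
    (1 - X) * derivative (invPoly p fun _ => 1) =
      1 - X ^ (p - 1) := by
  rw [derivative_invPoly]
  simpa using mul_neg_geom_sum (X : (ZMod p)[X]) (p - 1)

/-- A polynomial of degree less than `3p` with vanishing derivative in characteristic `p` is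
`c₀ + c₁ X^p + c₂ X^(2p)`. -/
theorem eval_neg_one_of_derivative_eq_zero (hp : Odd p) {f : (ZMod p)[X]}
    (hf : derivative f = 0) (hdeg : f.natDegree < 3 * p) :
    f.eval (-1) = f.eval 1 - 2 * f.coeff p := by
  have hp0 := (Fact.out : p.Prime).ne_zero
  obtain ⟨g, rfl⟩ : ∃ g, f = Polynomial.expand (ZMod p) p g :=
    ⟨_, (Polynomial.expand_contract p hf hp0).symm⟩
  rw [Polynomial.natDegree_expand] at hdeg
  have hg : g.natDegree < 3 := lt_of_mul_lt_mul_right hdeg (Nat.zero_le p)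
  have hc : (Polynomial.expand (ZMod p) p g).coeff p = g.coeff 1 := by
    have := Polynomial.coeff_expand_mul (Nat.pos_of_ne_zero hp0) g 1
    rwa [one_mul] at this
  rw [hc, Polynomial.expand_eval, Polynomial.expand_eval, hp.neg_one_pow, one_pow,
    Polynomial.eval_eq_sum_range' hg, Polynomial.eval_eq_sum_range' hg]
  simp [sum_range_succ]
  ring

theorem eq_zero_of_derivative_eq_zero {f : (ZMod p)[X]}
    (hf : derivative f = 0) (hdeg : f.natDegree < 2 * p) (h0 : f.coeff 0 = 0)
    (h1 : f.eval 1 = 0) : f = 0 := by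
  have hp0 := (Fact.out : p.Prime).ne_zero
  obtain ⟨g, rfl⟩ : ∃ g, f = Polynomial.expand (ZMod p) p g :=
    ⟨_, (Polynomial.expand_contract p hf hp0).symm⟩
  rw [Polynomial.natDegree_expand] at hdeg
  have hg : g.natDegree < 2 := lt_of_mul_lt_mul_right hdeg (Nat.zero_le p)
  have hc0 : g.coeff 0 = 0 := by
    rw [← h0]
    simpa using (Polynomial.coeff_expand_mul (Nat.pos_of_ne_zero hp0) g 0).symm
  have hc1 : g.coeff 1 = 0 := by
    rw [Polynomial.expand_eval, one_pow, Polynomial.eval_eq_sum_range' hg] at h1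
    simpa [sum_range_succ, hc0] using h1
  have : g = 0 := by
    rw [g.as_sum_range' 2 hg]
    simp [sum_range_succ, hc0, hc1]
  simp [this]

theorem sum_range_inv_pow {j : ℕ} (hj : j + 1 < p) : ∑ m ∈ range p, ((m : ZMod p)⁻¹) ^ j = 0 := by
  rw [sum_range_natCast_zmod fun x => x⁻¹ ^ j]
  refine (Equiv.sum_comp (Equiv.inv (ZMod p)) (fun x => x ^ j)).trans ?_
  exact FiniteField.sum_pow_lt_card_sub_one (ZMod p) j (by rw [ZMod.card]; omega)

theorem invSum_inv_pow {j : ℕ} (hj : j + 2 < p) :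
    invSum p (fun i => ((i : ZMod p)⁻¹) ^ j) p = 0 := by
  simpa [invSum, pow_succ] using sum_range_inv_pow (p := p) (j := j + 1) hj

theorem invSum_one (hp : 3 < p) : invSum p (fun _ => 1) p = 0 := by
  simpa using invSum_inv_pow (p := p) (j := 0) (by omega)

theorem invSum_inv (hp : 3 < p) : invSum p (fun i => (i : ZMod p)⁻¹) p = 0 := by
  simpa using invSum_inv_pow (p := p) (j := 1) (by omega)

theorem two_mul_invSum_invSum_one (m : ℕ) :
    2 * invSum p (invSum p fun _ => 1) m =
      invSum p (fun _ => 1) m ^ 2 - invSum p (fun i => (i : ZMod p)⁻¹) m := by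
  induction m with
  | zero => simp [invSum]
  | succ m ih =>
    rw [invSum_succ, invSum_succ, invSum_succ, mul_add, ih]
    ring

theorem invSum_invSum_one (hp : 3 < p) : invSum p (invSum p fun _ => 1) p = 0 := by
  have h := two_mul_invSum_invSum_one (p := p) p
  rw [invSum_one hp, invSum_inv hp] at h
  simpa [two_ne_zero_zmod hp] using h

theorem derivative_X_pow_char :
    derivative (X ^ p : (ZMod p)[X]) = 0 := by
  rw [Polynomial.derivative_X_pow, CharP.cast_eq_zero, map_zero, zero_mul]

theorem one_sub_X_ne_zero : (1 - X : (ZMod p)[X]) ≠ 0 := by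
  rw [← neg_ne_zero, neg_sub]
  simpa using Polynomial.X_sub_C_ne_zero (1 : ZMod p)

theorem invPoly_one_sq (hp : 3 < p) :
    invPoly p (fun _ => 1) ^ 2 =
      2 * (1 - X ^ p) * invPoly p (invSum p fun _ => 1)
        - 2 * X ^ p * invPoly p (fun i => (i : ZMod p)⁻¹) := by
  rw [← sub_eq_zero]
  set L := invPoly p (fun _ => 1) with hL
  set T := invPoly p (invSum p fun _ => 1) with hT
  set L₂ := invPoly p (fun i => (i : ZMod p)⁻¹) with hL₂
  have dL : (1 - X) * derivative L = 1 - X ^ (p - 1) :=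
    one_sub_X_mul_derivative_invPoly_one
  have dT : (1 - X) * derivative T = L :=
    one_sub_X_mul_derivative_invPoly (invSum_one hp)
  have dL₂ : X * derivative L₂ = L := by
    simpa using X_mul_derivative_invPoly (p := p) fun _ => 1
  have hX : (X : (ZMod p)[X]) * X ^ (p - 1) = X ^ p :=
    mul_pow_sub_one (by omega) _
  have nL : L.natDegree ≤ p - 1 := natDegree_invPoly_le _
  have nT : T.natDegree ≤ p - 1 := natDegree_invPoly_le _
  have nL₂ : L₂.natDegree ≤ p - 1 := natDegree_invPoly_le _
  refine eq_zero_of_derivative_eq_zero ?_ ?_ ?_ ?_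
  · refine mul_left_cancel₀ (mul_ne_zero Polynomial.X_ne_zero one_sub_X_ne_zero) ?_
    have dX := derivative_X_pow_char (p := p)
    rw [← hX] at dX ⊢
    generalize (X ^ (p - 1) : (ZMod p)[X]) = u at *
    rw [mul_zero]
    have key : derivative (L ^ 2 - (2 * (1 - X * u) * T -
        2 * (X * u) * L₂)) = 2 * L * derivative L -
        2 * (1 - X * u) * derivative T +
        2 * (X * u) * derivative L₂ := by
      generalize X * u = w at *
      simp only [Polynomial.derivative_sub, Polynomial.derivative_mul, Polynomial.derivative_one,
        Polynomial.derivative_ofNat, pow_two, dX]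
      ring
    rw [key]
    linear_combination 2 * L * X * dL - 2 * (1 - X * u) * X * dT +
      2 * (X * u) * (1 - X) * dL₂
  · refine lt_of_le_of_lt (b := p + (p - 1)) ?_ (by omega)
    compute_degree
    omega
  · have : p ≠ 0 := by omega
    simp [Polynomial.coeff_zero_eq_eval_zero, hL, hT, eval_zero_invPoly, this]
  · simp [hL, hT, hL₂, eval_one_invPoly, invSum_one hp, invSum_inv hp]

theorem natCast_sub_char {m : ℕ} (hm : m ≤ p) : ((p - m : ℕ) : ZMod p) = -m := by
  rw [Nat.cast_sub hm, CharP.cast_eq_zero, zero_sub]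

theorem coeff_invPoly_mul_invPoly_one (f : ℕ → ZMod p) :
    (invPoly p f * invPoly p fun _ => 1).coeff p =
      -∑ m ∈ range p, f m * ((m : ZMod p)⁻¹) ^ 2 := by
  rw [Polynomial.coeff_mul, Nat.sum_antidiagonal_eq_sum_range_succ
    (fun i j => (invPoly p f).coeff i * (invPoly p fun _ => 1).coeff j), sum_range_succ,
    Nat.sub_self, coeff_zero_invPoly, mul_zero, add_zero, ← sum_neg_distrib]
  refine sum_congr rfl fun m hm => ?_
  have hm' := mem_range.1 hm
  rw [coeff_invPoly, coeff_invPoly, if_pos hm']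
  rcases Nat.eq_zero_or_pos m with rfl | h0
  · simp
  · rw [if_pos (by omega), natCast_sub_char hm'.le, inv_neg]
    ring

theorem eval_neg_one_cubic (hp : 3 < p) :
    (invPoly p fun _ => 1).eval (-1) ^ 3
      - 24 * (invPoly p (invSum p (invSum p fun _ => 1))).eval (-1)
      - 12 * (invPoly p (invSum p fun i => (i : ZMod p)⁻¹)).eval (-1)
      - 12 * (invPoly p fun i => invSum p (fun _ => 1) i * (i : ZMod p)⁻¹).eval (-1)
      - 6 * (invPoly p fun i => (i : ZMod p)⁻¹ * (i : ZMod p)⁻¹).eval (-1) =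
    4 * ∑ m ∈ range p, invSum p (fun _ => 1) m * ((m : ZMod p)⁻¹) ^ 2 := by
  have hodd : Odd p := (Fact.out : p.Prime).odd_of_ne_two (by omega)
  have hp4 : 4 < p := by obtain ⟨k, hk⟩ := hodd; omega
  have hsq := invPoly_one_sq hp
  have hcoeff := coeff_invPoly_mul_invPoly_one (p := p) (invSum p fun _ => 1)
  set L := invPoly p (fun _ => 1) with hL
  set T₂ := invPoly p (invSum p fun _ => 1) with hT₂
  set T₃ := invPoly p (invSum p (invSum p fun _ => 1)) with hT₃
  set L₂ := invPoly p (fun i => (i : ZMod p)⁻¹) with hL₂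
  set L₃ := invPoly p (fun i => (i : ZMod p)⁻¹ * (i : ZMod p)⁻¹) with hL₃
  set W := invPoly p (invSum p fun i => (i : ZMod p)⁻¹) with hW
  set V := invPoly p (fun i => invSum p (fun _ => 1) i * (i : ZMod p)⁻¹) with hV
  have dL : (1 - X) * derivative L = 1 - X ^ (p - 1) := one_sub_X_mul_derivative_invPoly_one
  have dT₃ : (1 - X) * derivative T₃ = T₂ :=
    one_sub_X_mul_derivative_invPoly (invSum_invSum_one hp)
  have dW : (1 - X) * derivative W = L₂ := one_sub_X_mul_derivative_invPoly (invSum_inv hp)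
  have dL₃ : X * derivative L₃ = L₂ := X_mul_derivative_invPoly _
  have dV : X * derivative V = T₂ := X_mul_derivative_invPoly _
  have hX : (X : (ZMod p)[X]) * X ^ (p - 1) = X ^ p := mul_pow_sub_one (by omega) _
  have nL : L.natDegree ≤ p - 1 := natDegree_invPoly_le _
  have nT₃ : T₃.natDegree ≤ p - 1 := natDegree_invPoly_le _
  have nL₃ : L₃.natDegree ≤ p - 1 := natDegree_invPoly_le _
  have nW : W.natDegree ≤ p - 1 := natDegree_invPoly_le _
  have nV : V.natDegree ≤ p - 1 := natDegree_invPoly_le _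
  set f : (ZMod p)[X] := L ^ 3 - 6 * (1 - X ^ p) * T₃ + 6 * X ^ p * (1 - X ^ p) * (W + V + T₃)
    - 6 * X ^ p * X ^ p * L₃ with hf
  have hder : derivative f = 0 := by
    refine mul_left_cancel₀ (mul_ne_zero Polynomial.X_ne_zero one_sub_X_ne_zero) ?_
    have dX := derivative_X_pow_char (p := p)
    rw [hf]
    rw [← hX] at dX hsq ⊢
    generalize (X ^ (p - 1) : (ZMod p)[X]) = u at *
    rw [mul_zero]
    have key : derivative (L ^ 3 - 6 * (1 - X * u) * T₃ +
        6 * (X * u) * (1 - X * u) * (W + V + T₃) - 6 * (X * u) * (X * u) * L₃) =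
        3 * L ^ 2 * derivative L - 6 * (1 - X * u) * derivative T₃ +
        6 * (X * u) * (1 - X * u) * (derivative W + derivative V + derivative T₃) -
        6 * (X * u) ^ 2 * derivative L₃ := by
      generalize X * u = w at *
      simp only [Polynomial.derivative_sub, Polynomial.derivative_mul, Polynomial.derivative_one,
        Polynomial.derivative_add, Polynomial.derivative_ofNat, pow_succ, pow_zero, dX]
      ring
    rw [key]
    linear_combination 3 * L ^ 2 * X * dL + 3 * X * (1 - u) * hsq
      - 6 * (1 - X * u) * X * dT₃ + 6 * (X * u) * (1 - X * u) *
        (X * dW + (1 - X) * dV + X * dT₃) - 6 * (X * u) ^ 2 * (1 - X) * dL₃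
  have hdeg : f.natDegree < 3 * p := by
    refine lt_of_le_of_lt (b := p + p + (p - 1)) ?_ (by omega)
    rw [hf]
    compute_degree
    omega
  have h1 : f.eval 1 = 0 := by
    have hL₃1 : L₃.eval 1 = 0 := by
      rw [hL₃, eval_one_invPoly]
      simpa [pow_two] using invSum_inv_pow (p := p) (j := 2) (by omega)
    simp [hf, hL, eval_one_invPoly, invSum_one hp, hL₃1]
  have hcX (g : (ZMod p)[X]) : (X ^ p * g).coeff p = g.coeff 0 := by
    simpa using Polynomial.coeff_X_pow_mul g p 0
  have hc : f.coeff p = -2 * ∑ m ∈ range p, invSum p (fun _ => 1) m * ((m : ZMod p)⁻¹) ^ 2 := by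
    have hT₃p : T₃.coeff p = 0 := by rw [hT₃, coeff_invPoly, if_neg (lt_irrefl p)]
    have h6 : f = Polynomial.C 2 * (T₂ * L) - Polynomial.C 6 * T₃ + X ^ p * (-2 * T₂ * L
        - 2 * L₂ * L + 6 * T₃ + 6 * (1 - X ^ p) * (W + V + T₃) - 6 * X ^ p * L₃) := by
      rw [hf]
      simp only [map_ofNat]
      linear_combination L * hsq
    rw [h6, Polynomial.coeff_add, Polynomial.coeff_sub, Polynomial.coeff_C_mul,
      Polynomial.coeff_C_mul, hcX, hcoeff, hT₃p, Polynomial.coeff_zero_eq_eval_zero]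
    simp [hT₃, hW, hV, hL, hL₃, eval_zero_invPoly, show p ≠ 0 by omega]
  have h := eval_neg_one_of_derivative_eq_zero hodd hder hdeg
  rw [h1, hc, hf] at h
  simp only [Polynomial.eval_add, Polynomial.eval_sub, Polynomial.eval_mul, Polynomial.eval_pow,
    Polynomial.eval_X, Polynomial.eval_one, Polynomial.eval_ofNat, hodd.neg_one_pow] at h
  linear_combination h

end TruncatedPolylog

section ReflectedSums

variable {K : Type*} [Field K] {n : ℕ} {x y O E P : ℕ → K}

theorem sum_reflect_of_eq {f g : ℕ → K} (h : ∀ k < n, f (n - 1 - k) = g k) :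
    ∑ k ∈ range n, f k = ∑ k ∈ range n, g k := by
  rw [← sum_range_reflect]
  exact sum_congr rfl fun k hk => h k (mem_range.1 hk)

theorem sum_range_succ_diff {F : ℕ → K} {f : ℕ → K} (h : ∀ k, F (k + 1) - F k = f k) :
    ∑ k ∈ range n, f k = F n - F 0 := by
  rw [← sum_range_sub]
  exact sum_congr rfl fun k _ => (h k).symm

theorem reflect_odd (hxy : ∀ k < n, x (n - 1 - k) = -y k) (hO : ∀ k, O (k + 1) = O k + x k)
    (hE0 : E 0 = 0) (hE : ∀ k, E (k + 1) = E k + y k) {k : ℕ} (hk : k ≤ n) :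
    O (n - k) = E k + O n := by
  induction k with
  | zero => simp [hE0]
  | succ k ih =>
    have h := hO (n - 1 - k)
    rw [show n - 1 - k + 1 = n - k by omega, ih (by omega), hxy k hk] at h
    rw [show n - (k + 1) = n - 1 - k by omega, hE]
    linear_combination -h

theorem even_end (hxy : ∀ k < n, x (n - 1 - k) = -y k) (hO0 : O 0 = 0)
    (hO : ∀ k, O (k + 1) = O k + x k) (hE0 : E 0 = 0) (hE : ∀ k, E (k + 1) = E k + y k) :
    E n = -O n := by
  have h := reflect_odd hxy hO hE0 hE le_rfl
  rw [Nat.sub_self, hO0] at h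
  linear_combination -h

theorem reflect_even (hxy : ∀ k < n, x (n - 1 - k) = -y k)
    (hO : ∀ k, O (k + 1) = O k + x k) (hE0 : E 0 = 0) (hE : ∀ k, E (k + 1) = E k + y k)
    {k : ℕ} (hk : k ≤ n) : E (n - k) = O k - O n := by
  have h := reflect_odd hxy hO hE0 hE (Nat.sub_le n k)
  rw [Nat.sub_sub_self hk] at h
  linear_combination -h

theorem reflect_sq (hxy : ∀ k < n, x (n - 1 - k) = -y k) (hP0 : P 0 = 0)
    (hP : ∀ k, P (k + 1) = P k + x k ^ 2 + y k ^ 2) {k : ℕ} (hk : k ≤ n) :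
    P (n - k) = P n - P k := by
  induction k with
  | zero => simp [hP0]
  | succ k ih =>
    have h := hP (n - 1 - k)
    have h1 := hxy (n - 1 - k) (by omega)
    rw [show n - 1 - (n - 1 - k) = k by omega] at h1
    rw [show n - 1 - k + 1 = n - k by omega, ih (by omega), hxy k hk] at h
    rw [show n - (k + 1) = n - 1 - k by omega, hP]
    linear_combination -h + (x k - y (n - 1 - k)) * h1

/-- Closed form of `∑ x E²`, where `E` and `O` are the partial sums of two sequences `y` and `x`
that are negatives of each other's reversal. -/
theorem sum_mul_sq_of_reflect (h2 : (2 : K) ≠ 0) (h3 : (3 : K) ≠ 0) {T b h₁₂ : K}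
    (hxy : ∀ k < n, x (n - 1 - k) = -y k) (hO0 : O 0 = 0)
    (hO : ∀ k, O (k + 1) = O k + x k) (hE0 : E 0 = 0) (hE : ∀ k, E (k + 1) = E k + y k)
    (hP0 : P 0 = 0) (hP : ∀ k, P (k + 1) = P k + x k ^ 2 + y k ^ 2) (hPn : P n = 0)
    (hb : ∑ k ∈ range n, y k ^ 3 = -b / 4)
    (hsq : (∑ k ∈ range n, (y k - x k)) ^ 2 =
      4 * ∑ k ∈ range n, (y k * (E k + O k + x k) - x k * (E k + O k)) +
        2 * ∑ k ∈ range n, (y k ^ 2 - x k ^ 2))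
    (hT : 2 * T = ∑ k ∈ range n, (y k * ((E k + O k + x k) ^ 2 - (P k + x k ^ 2)) -
      x k * ((E k + O k) ^ 2 - P k)))
    (hcube : (∑ k ∈ range n, (y k - x k)) ^ 3 - 24 * T
      - 12 * ∑ k ∈ range n, (y k * (P k + x k ^ 2) - x k * P k)
      - 12 * ∑ k ∈ range n, (y k ^ 2 * (E k + O k + x k) - x k ^ 2 * (E k + O k))
      - 6 * ∑ k ∈ range n, (y k ^ 3 - x k ^ 3) = 4 * h₁₂) :
    4 * ∑ k ∈ range n, x k * E k ^ 2 = 4 * O n ^ 3 - b / 12 + h₁₂ / 3 ∧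
      ∑ k ∈ range n, x k * E k = - O n ^ 2 ∧ 2 * ∑ k ∈ range n, y k * E k = O n ^ 2 ∧
      ∑ k ∈ range n, y k = -O n ∧ ∑ k ∈ range n, y k ^ 2 = 0 := by
  have hEn : E n = -O n := even_end hxy hO0 hO hE0 hE
  have hrE (k : ℕ) (hk : k < n) : E (n - 1 - k) = O k + x k - O n := by
    rw [show n - 1 - k = n - (k + 1) by omega, reflect_even hxy hO hE0 hE hk, hO]
  have hrO (k : ℕ) (hk : k < n) : O (n - 1 - k) = E k + y k + O n := by
    rw [show n - 1 - k = n - (k + 1) by omega, reflect_odd hxy hO hE0 hE hk, hE]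
  have hrP (k : ℕ) (hk : k < n) : P (n - 1 - k) = -(P k + x k ^ 2 + y k ^ 2) := by
    rw [show n - 1 - k = n - (k + 1) by omega, reflect_sq hxy hP0 hP hk, hP, hPn, zero_sub]
  have sumy : ∑ k ∈ range n, y k = -O n := by
    rw [sum_range_succ_diff (F := E) fun k => by rw [hE]; ring, hE0, hEn, sub_zero]
  have sumx : ∑ k ∈ range n, x k = O n := by
    rw [sum_range_succ_diff (F := O) fun k => by rw [hO]; ring, hO0, sub_zero]
  have sqxy : ∑ k ∈ range n, x k ^ 2 = ∑ k ∈ range n, y k ^ 2 :=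
    sum_reflect_of_eq fun k hk => by rw [hxy k hk]; ring
  have sqadd : ∑ k ∈ range n, x k ^ 2 + ∑ k ∈ range n, y k ^ 2 = 0 := by
    rw [← sum_add_distrib, sum_range_succ_diff (F := P) fun k => by rw [hP]; ring, hP0, hPn,
      sub_zero]
  have sqy : ∑ k ∈ range n, y k ^ 2 = 0 := by
    rw [sqxy] at sqadd
    exact (mul_eq_zero_iff_left h2).1 (by linear_combination sqadd)
  have cubexy : ∑ k ∈ range n, x k ^ 3 = -∑ k ∈ range n, y k ^ 3 := by
    rw [← sum_neg_distrib]
    exact sum_reflect_of_eq fun k hk => by rw [hxy k hk]; ring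
  have hV : ∑ k ∈ range n, x k ^ 2 * (E k + O k) =
      ∑ k ∈ range n, y k ^ 2 * (E k + O k + x k) + ∑ k ∈ range n, y k ^ 3 := by
    rw [← sum_add_distrib]
    exact sum_reflect_of_eq fun k hk => by rw [hxy k hk, hrE k hk, hrO k hk]; ring
  have hW : ∑ k ∈ range n, x k * P k =
      ∑ k ∈ range n, y k * (P k + x k ^ 2) + ∑ k ∈ range n, y k ^ 3 := by
    rw [← sum_add_distrib]
    exact sum_reflect_of_eq fun k hk => by rw [hxy k hk, hrP k hk]; ring
  have hα : ∑ k ∈ range n, x k * E k ^ 2 = -∑ k ∈ range n, y k * (O k + x k) ^ 2 +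
      2 * O n * ∑ k ∈ range n, y k * (O k + x k) - O n ^ 2 * ∑ k ∈ range n, y k := by
    rw [mul_sum, mul_sum, ← sum_neg_distrib, ← sum_add_distrib, ← sum_sub_distrib]
    exact sum_reflect_of_eq fun k hk => by rw [hxy k hk, hrE k hk]; ring
  have hEE : 2 * ∑ k ∈ range n, y k * E k + ∑ k ∈ range n, y k ^ 2 = O n ^ 2 := by
    rw [mul_sum, ← sum_add_distrib,
      sum_range_succ_diff (F := fun k => E k ^ 2) fun k => by rw [hE]; ring, hE0, hEn]
    ring
  have hOO : 2 * ∑ k ∈ range n, x k * O k + ∑ k ∈ range n, x k ^ 2 = O n ^ 2 := by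
    rw [mul_sum, ← sum_add_distrib,
      sum_range_succ_diff (F := fun k => O k ^ 2) fun k => by rw [hO]; ring, hO0]
    ring
  have hEO : ∑ k ∈ range n, x k * E k + ∑ k ∈ range n, y k * (O k + x k) = -O n ^ 2 := by
    rw [← sum_add_distrib,
      sum_range_succ_diff (F := fun k => E k * O k) fun k => by rw [hE, hO]; ring, hE0, hEn]
    ring
  have hdiff : ∑ k ∈ range n, (y k * (E k + O k + x k) - x k * (E k + O k)) =
      ∑ k ∈ range n, y k * E k + ∑ k ∈ range n, y k * (O k + x k) -
        ∑ k ∈ range n, x k * E k - ∑ k ∈ range n, x k * O k := by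
    rw [← sum_add_distrib, ← sum_sub_distrib, ← sum_sub_distrib]
    exact sum_congr rfl fun k _ => by ring
  have hK : ∑ k ∈ range n, (y k * (E k + O k + x k) ^ 2 - x k * (E k + O k) ^ 2) +
      2 * ∑ k ∈ range n, x k * E k ^ 2 - 2 * ∑ k ∈ range n, y k * (O k + x k) ^ 2 +
      (∑ k ∈ range n, y k ^ 3 - ∑ k ∈ range n, x k ^ 3) / 3 +
      (∑ k ∈ range n, y k ^ 2 * (E k + O k + x k) - ∑ k ∈ range n, x k ^ 2 * (E k + O k)) =
      4 / 3 * O n ^ 3 := by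
    rw [mul_sum, mul_sum, ← sum_sub_distrib, ← sum_sub_distrib, sum_div, ← sum_add_distrib,
      ← sum_sub_distrib, ← sum_add_distrib, ← sum_add_distrib,
      sum_range_succ_diff (F := fun k => E k ^ 3 / 3 + E k ^ 2 * O k - E k * O k ^ 2 - O k ^ 3 / 3)
        fun k => by rw [hE, hO]; field_simp; ring, hE0, hO0, hEn]
    field_simp
    ring
  have hT' : 2 * T = ∑ k ∈ range n, (y k * (E k + O k + x k) ^ 2 - x k * (E k + O k) ^ 2) -
      (∑ k ∈ range n, y k * (P k + x k ^ 2) - ∑ k ∈ range n, x k * P k) := by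
    rw [hT, ← sum_sub_distrib, ← sum_sub_distrib]
    exact sum_congr rfl fun k _ => by ring
  rw [hdiff] at hsq
  simp only [sum_sub_distrib] at hsq hcube
  have h4 : (4 : K) ≠ 0 := by
    rw [show (4 : K) = 2 * 2 by norm_num]; exact mul_ne_zero h2 h2
  rw [sumx, sumy] at hsq hcube
  rw [sumy] at hα
  rw [sqxy] at hsq hOO
  rw [sqy] at hsq hOO hEE
  rw [cubexy, hb] at hcube hK
  rw [hV, hW, hb] at hcube
  rw [hV, hb] at hK
  rw [hW, hb] at hT'
  generalize ∑ k ∈ range n, (y k * (E k + O k + x k) ^ 2 - x k * (E k + O k) ^ 2) = κ at *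
  generalize ∑ k ∈ range n, x k * E k ^ 2 = α at *
  generalize ∑ k ∈ range n, y k * (O k + x k) ^ 2 = β at *
  generalize ∑ k ∈ range n, y k * (O k + x k) = s at *
  generalize ∑ k ∈ range n, x k * E k = t at *
  generalize ∑ k ∈ range n, y k * E k = e at *
  generalize ∑ k ∈ range n, x k * O k = o at *
  have hs : s = 0 := by
    refine (mul_eq_zero_iff_left (mul_ne_zero h4 h2)).1 ?_
    linear_combination -hsq + 4 * hEO - 2 * hEE + 2 * hOO
  rw [hs] at hα hEO
  refine ⟨?_, by linear_combination hEO, by linear_combination hEE, sumy, sqy⟩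
  have h12 : (12 : K) ≠ 0 := by
    rw [show (12 : K) = 3 * 4 by norm_num]; exact mul_ne_zero h3 h4
  clear hb
  field_simp at hK hT' hcube ⊢
  refine mul_left_cancel₀ h4 ?_
  linear_combination 12 * hK + 288 * hα + 36 * hT' + 3 * hcube

end ReflectedSums

section Main

variable {p : ℕ} [Fact p.Prime]

theorem choose_pred_eq_neg_one_pow {k : ℕ} (hk : k < p) :
    ((p - 1).choose k : ZMod p) = (-1) ^ k := by
  induction k with
  | zero => simp
  | succ k ih =>
    have hp : p - 1 + 1 = p := by omega
    have h := Nat.choose_succ_succ (p - 1) k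
    rw [Nat.succ_eq_add_one, hp] at h
    have h0 : (p.choose (k + 1) : ZMod p) = 0 := by
      rw [ZMod.natCast_eq_zero_iff]
      exact (Fact.out : p.Prime).dvd_choose_self k.succ_ne_zero hk
    rw [h, Nat.cast_add, ih (by omega)] at h0
    rw [pow_succ]
    linear_combination h0

theorem hasResidue_two_mul_fermatQ :
    HasResidue p (2 * fermatQ p) (∑ m ∈ range (p - 1), (-1) ^ m * ((m + 1 : ℕ) : ZMod p)⁻¹) := by
  have hp := (Fact.out : p.Prime).two_le
  have hp0 : (p : ℚ) ≠ 0 := by positivity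
  have hsum : 2 * fermatQ p =
      ∑ m ∈ range (p - 1), ((p - 1).choose m : ℚ) * ((m + 1 : ℕ) : ℚ)⁻¹ := by
    have hterm (m : ℕ) : ((p - 1).choose m : ℚ) * ((m + 1 : ℕ) : ℚ)⁻¹ =
        (p.choose (m + 1) : ℚ) / p := by
      have h := Nat.add_one_mul_choose_eq (p - 1) m
      rw [show p - 1 + 1 = p by omega] at h
      have h' : (p : ℚ) * (p - 1).choose m = p.choose (m + 1) * (m + 1 : ℕ) := by exact_mod_cast h
      have : ((m + 1 : ℕ) : ℚ) ≠ 0 := by positivity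
      field_simp
      linear_combination h'
    have htot : (∑ m ∈ range (p - 1), (p.choose (m + 1) : ℚ)) = 2 ^ p - 2 := by
      have h := Nat.sum_range_choose p
      rw [sum_range_succ, sum_range_eq_sum_range_pred_add (by omega), Nat.choose_self,
        Nat.choose_zero_right] at h
      have h' : (∑ m ∈ range (p - 1), (p.choose (m + 1) : ℚ)) + 1 + 1 = 2 ^ p := by exact_mod_cast h
      linear_combination h'
    rw [sum_congr rfl fun m _ => hterm m, ← sum_div, htot, fermatQ,
      show (2 : ℚ) ^ p = 2 * 2 ^ (p - 1) by rw [mul_pow_sub_one (by omega)]]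
    ring
  rw [hsum]
  refine HasResidue.sum _ fun m hm => ?_
  have hm' := mem_range.1 hm
  rw [← choose_pred_eq_neg_one_pow (by omega : m < p)]
  exact (HasResidue.natCast _).mul
    ((HasResidue.natCast _).inv (natCast_ne_zero_of_lt m.succ_pos (by omega)))

theorem sum_range_two_mul {M : Type*} [AddCommMonoid M] (f : ℕ → M) (n : ℕ) :
    ∑ m ∈ range (2 * n), f m = ∑ k ∈ range n, (f (2 * k) + f (2 * k + 1)) := by
  induction n with
  | zero => simp
  | succ n ih => rw [mul_add_one, sum_range_succ, sum_range_succ, ih, sum_range_succ, add_assoc]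

theorem eval_neg_one_invPoly {n : ℕ} (hn : p = 2 * n + 1) (f : ℕ → ZMod p) :
    (invPoly p f).eval (-1) = ∑ k ∈ range n, (f (2 * k + 2) * ((2 * k + 2 : ℕ) : ZMod p)⁻¹ -
      f (2 * k + 1) * ((2 * k + 1 : ℕ) : ZMod p)⁻¹) := by
  rw [eval_invPoly, sum_range_eq_sum_range_pred_add (by omega), show p - 1 = 2 * n by omega,
    sum_range_two_mul]
  simp only [Nat.cast_zero, inv_zero, mul_zero, zero_mul, add_zero]
  refine sum_congr rfl fun k _ => ?_
  rw [show 2 * k + 1 + 1 = 2 * (k + 1) by ring, pow_succ,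
    pow_mul, pow_mul]
  simp only [even_two, Even.neg_pow, one_pow]
  ring

/-- `x` runs over the reciprocals of the odd numbers below `p`, `y` over those of the even ones,
and `E` is the sequence of partial sums of `y`. -/
theorem exists_parity_sums (hp : 3 < p) {n : ℕ} (hn : p = 2 * n + 1) {b : ZMod p}
    (hb : HasResidue p (bernoulli (p - 3)) b) {x y E : ℕ → ZMod p}
    (hx : ∀ k, x k = ((2 * k + 1 : ℕ) : ZMod p)⁻¹) (hy : ∀ k, y k = ((2 * k + 2 : ℕ) : ZMod p)⁻¹)
    (hE0 : E 0 = 0) (hE : ∀ k, E (k + 1) = E k + y k) :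
    ∃ q, HasResidue p (fermatQ p) q ∧
      4 * ∑ k ∈ range n, x k * E k ^ 2 = 4 * q ^ 3 + b / 4 ∧
      ∑ k ∈ range n, x k * E k = - q ^ 2 ∧ 2 * ∑ k ∈ range n, y k * E k = q ^ 2 ∧
      ∑ k ∈ range n, x k = q ∧ ∑ k ∈ range n, y k = -q ∧ ∑ k ∈ range n, y k ^ 2 = 0 := by
  have h2 : (2 : ZMod p) ≠ 0 := two_ne_zero_zmod hp
  have h3 : (3 : ZMod p) ≠ 0 := by
    simpa using natCast_ne_zero_of_lt (p := p) (m := 3) (by omega) (by omega)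
  have h4 : (4 : ZMod p) ≠ 0 := by
    rw [show (4 : ZMod p) = 2 * 2 by norm_num]; exact mul_ne_zero h2 h2
  have hodd : Odd p := ⟨n, hn⟩
  set O : ℕ → ZMod p := fun k => ∑ i ∈ range k, x i with hOdef
  set P : ℕ → ZMod p := fun k => invSum p (fun i => (i : ZMod p)⁻¹) (2 * k + 1) with hPdef
  have hO0 : O 0 = 0 := by simp [hOdef]
  have hO (k : ℕ) : O (k + 1) = O k + x k := sum_range_succ _ _
  have hP0 : P 0 = 0 := by simp [hPdef, invSum]
  have hP₁ (k : ℕ) : invSum p (fun i => (i : ZMod p)⁻¹) (2 * k + 2) = P k + x k ^ 2 := by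
    rw [invSum_succ, hx, pow_two]
  have hP (k : ℕ) : P (k + 1) = P k + x k ^ 2 + y k ^ 2 := by
    rw [← hP₁, hy, pow_two]
    exact invSum_succ _ _
  have hPn : P n = 0 := by
    simp only [hPdef]
    rw [show 2 * n + 1 = p from hn.symm]
    exact invSum_inv hp
  have hH (k : ℕ) : invSum p (fun _ => 1) (2 * k + 1) = E k + O k := by
    induction k with
    | zero => simp [invSum, hE0, hO0]
    | succ k ih =>
      rw [show 2 * (k + 1) + 1 = 2 * k + 1 + 1 + 1 by ring, invSum_succ, invSum_succ, ih, hE, hO,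
        hx, hy]
      ring
  have hH₁ (k : ℕ) : invSum p (fun _ => 1) (2 * k + 2) = E k + O k + x k := by
    rw [invSum_succ, hH, hx, one_mul]
  have hxy (k : ℕ) (hk : k < n) : x (n - 1 - k) = -y k := by
    rw [hx, hy, ← inv_neg, ← natCast_sub_char (by omega)]
    congr 2
    omega
  have hL : (invPoly p fun _ => 1).eval (-1) = ∑ k ∈ range n, (y k - x k) := by
    simp only [eval_neg_one_invPoly hn, hx, hy, one_mul]
  have hT₂ : (invPoly p (invSum p fun _ => 1)).eval (-1) =
      ∑ k ∈ range n, (y k * (E k + O k + x k) - x k * (E k + O k)) := by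
    rw [eval_neg_one_invPoly hn]
    refine sum_congr rfl fun k _ => ?_
    rw [hH, hH₁, ← hx, ← hy]
    ring
  have hL₂ : (invPoly p fun i => (i : ZMod p)⁻¹).eval (-1) =
      ∑ k ∈ range n, (y k ^ 2 - x k ^ 2) := by
    simp only [eval_neg_one_invPoly hn, hx, hy, pow_two]
  have hL₃ : (invPoly p fun i => (i : ZMod p)⁻¹ * (i : ZMod p)⁻¹).eval (-1) =
      ∑ k ∈ range n, (y k ^ 3 - x k ^ 3) := by
    simp only [eval_neg_one_invPoly hn, hx, hy, pow_succ, pow_zero, one_mul]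
  have hW : (invPoly p (invSum p fun i => (i : ZMod p)⁻¹)).eval (-1) =
      ∑ k ∈ range n, (y k * (P k + x k ^ 2) - x k * P k) := by
    rw [eval_neg_one_invPoly hn]
    refine sum_congr rfl fun k _ => ?_
    rw [hP₁, ← hx, ← hy]
    ring
  have hV : (invPoly p fun i => invSum p (fun _ => 1) i * (i : ZMod p)⁻¹).eval (-1) =
      ∑ k ∈ range n, (y k ^ 2 * (E k + O k + x k) - x k ^ 2 * (E k + O k)) := by
    rw [eval_neg_one_invPoly hn]
    refine sum_congr rfl fun k _ => ?_
    rw [hH, hH₁, ← hx, ← hy]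
    ring
  have hT₃ : 2 * (invPoly p (invSum p (invSum p fun _ => 1))).eval (-1) =
      ∑ k ∈ range n, (y k * ((E k + O k + x k) ^ 2 - (P k + x k ^ 2)) -
      x k * ((E k + O k) ^ 2 - P k)) := by
    rw [eval_neg_one_invPoly hn, mul_sum]
    refine sum_congr rfl fun k _ => ?_
    have e₁ := two_mul_invSum_invSum_one (p := p) (2 * k + 1)
    have e₂ := two_mul_invSum_invSum_one (p := p) (2 * k + 2)
    rw [hH] at e₁
    rw [hH₁, hP₁] at e₂
    rw [← hx, ← hy]
    linear_combination y k * e₂ - x k * e₁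
  have hcubeb : ∑ k ∈ range n, y k ^ 3 = -b / 4 := by
    have h := sum_range_half_inv_cube hp hn hb
    rw [sum_range_succ'] at h
    have hyk (k : ℕ) : y k ^ 3 = ((k + 1 : ℕ) : ZMod p)⁻¹ ^ 3 / 8 := by
      rw [hy, show 2 * k + 2 = 2 * (k + 1) by ring, Nat.cast_mul, mul_inv, mul_pow, Nat.cast_ofNat,
        inv_pow 2 3]
      norm_num
      ring
    have h8 : (8 : ZMod p) ≠ 0 := by
      rw [show (8 : ZMod p) = 4 * 2 by norm_num]; exact mul_ne_zero h4 h2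
    simp only [Nat.cast_zero, inv_zero, ne_eq, OfNat.ofNat_ne_zero, not_false_eq_true, zero_pow,
      add_zero] at h
    rw [sum_congr rfl fun k _ => hyk k, ← sum_div, h]
    field_simp
    ring
  have hsq := congrArg (Polynomial.eval (-1)) (invPoly_one_sq hp)
  simp only [Polynomial.eval_sub, Polynomial.eval_mul, Polynomial.eval_pow,
    Polynomial.eval_X, Polynomial.eval_one, Polynomial.eval_ofNat, hodd.neg_one_pow, hL, hL₂,
    hT₂] at hsq
  have hcube := eval_neg_one_cubic hp
  have h₁₂ : ∑ m ∈ range p, invSum p (fun _ => 1) m * ((m : ZMod p)⁻¹) ^ 2 = b := by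
    simpa [invSum] using sum_range_harmonic_mul_inv_sq hp hb
  rw [hL, hW, hV, hL₃, h₁₂] at hcube
  obtain ⟨r₁, r₂, r₃, r₄, r₅⟩ := sum_mul_sq_of_reflect h2 h3 hxy hO0 hO hE0 hE hP0 hP hPn hcubeb
    (by linear_combination hsq) hT₃ hcube
  refine ⟨O n, ?_, ?_, r₂, r₃, rfl, r₄, r₅⟩
  · have hF := hasResidue_two_mul_fermatQ (p := p)
    have hsum : ∑ m ∈ range (p - 1), (-1) ^ m * ((m + 1 : ℕ) : ZMod p)⁻¹ = 2 * O n := by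
      rw [show p - 1 = 2 * n by omega, sum_range_two_mul]
      have hdiff : ∑ k ∈ range n, (x k - y k) = 2 * O n := by
        rw [sum_sub_distrib, r₄]
        simp only [hOdef]
        ring
      rw [← hdiff]
      refine sum_congr rfl fun k _ => ?_
      rw [hx, hy, pow_succ, pow_mul]
      simp only [even_two, Even.neg_pow, one_pow]
      ring
    have two : HasResidue p 2 2 := by simpa using HasResidue.natCast (p := p) 2
    have h := hF.div two h2
    rwa [hsum, mul_div_cancel_left₀ _ h2, mul_div_cancel_left₀ _ two_ne_zero] at h
  · rw [r₁]
    have h12 : (12 : ZMod p) ≠ 0 := by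
      rw [show (12 : ZMod p) = 3 * 4 by norm_num]; exact mul_ne_zero h3 h4
    field_simp
    ring

end Main

theorem sum_Hk_sq_congr (p : ℕ) (hp : p.Prime) (hp3 : 3 < p) :
    ratCongr p 1
      (∑ k ∈ Finset.Icc 1 ((p - 1) / 2),
        ((p : ℚ) / 2 - k) * harmonic k ^ 2 / (((p : ℚ) + 1 - 2 * k) * ((p : ℚ) + 2 * k)))
      (4 * fermatQ p - 6 * fermatQ p ^ 2 + 2 * fermatQ p ^ 3 + (1 / 8) * bernoulli (p - 3)) := by
  have : Fact p.Prime := ⟨hp⟩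
  obtain ⟨n, hn⟩ : Odd p := hp.odd_of_ne_two (by omega)
  obtain ⟨b, hb⟩ := exists_hasResidue_bernoulli (p := p) (n := p - 3) (by omega)
  set x : ℕ → ZMod p := fun k => ((2 * k + 1 : ℕ) : ZMod p)⁻¹ with hx
  set y : ℕ → ZMod p := fun k => ((2 * k + 2 : ℕ) : ZMod p)⁻¹ with hy
  set E : ℕ → ZMod p := fun k => ∑ i ∈ range k, y i with hEdef
  have hE (k : ℕ) : E (k + 1) = E k + y k := sum_range_succ _ _
  obtain ⟨q, hq, r₁, r₂, r₃, r₄, r₅, r₆⟩ := exists_parity_sums hp3 hn hb (x := x) (y := y) (E := E)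
    (fun _ => rfl) (fun _ => rfl) (by simp [hEdef]) hE
  have h2 : (2 : ZMod p) ≠ 0 := two_ne_zero_zmod hp3
  have h4 : (4 : ZMod p) ≠ 0 := by
    rw [show (4 : ZMod p) = 2 * 2 by norm_num]; exact mul_ne_zero h2 h2
  have h8 : (8 : ZMod p) ≠ 0 := by
    rw [show (8 : ZMod p) = 4 * 2 by norm_num]; exact mul_ne_zero h4 h2
  have num (m : ℕ) [m.AtLeastTwo] :
      HasResidue p (OfNat.ofNat m : ℚ) (OfNat.ofNat m : ZMod p) := by
    have := HasResidue.natCast (p := p) m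
    rwa [← Nat.cast_ofNat (R := ℚ), ← Nat.cast_ofNat (R := ZMod p)]
  have hxne {k : ℕ} (hk : k < n) : ((2 * k + 1 : ℕ) : ZMod p) ≠ 0 :=
    natCast_ne_zero_of_lt (by omega) (by omega)
  have hyne {k : ℕ} (hk : k < n) : ((2 * k + 2 : ℕ) : ZMod p) ≠ 0 :=
    natCast_ne_zero_of_lt (by omega) (by omega)
  have hright := ((((num 4).mul hq).sub ((num 6).mul (hq.pow 2))).add
    ((num 2).mul (hq.pow 3))).add ((HasResidue.one.div (num 8) h8).mul hb)
  refine HasResidue.ratCongr_one ?_ hright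
  rw [show (p - 1) / 2 = n by omega, ← Finset.Ico_add_one_right_eq_Icc, sum_Ico_eq_sum_range,
    Nat.add_sub_cancel]
  have hharm {k : ℕ} (hk : k < n) : HasResidue p (harmonic (1 + k)) (2 * E (k + 1)) := by
    rw [harmonic, hEdef, add_comm 1 k, mul_sum]
    refine HasResidue.sum _ fun i hi => ?_
    have hi' := mem_range.1 hi
    have hne : ((i + 1 : ℕ) : ZMod p) ≠ 0 := natCast_ne_zero_of_lt (by omega) (by omega)
    have hyi : 2 * y i = ((i + 1 : ℕ) : ZMod p)⁻¹ := by
      rw [hy]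
      simp only []
      rw [show 2 * i + 2 = 2 * (i + 1) by ring, Nat.cast_mul, mul_inv, Nat.cast_ofNat,
        mul_inv_cancel_left₀ h2]
    rw [hyi]
    exact (HasResidue.natCast _).inv hne
  have hterm (k : ℕ) (hk : k < n) : x k * y k = x k - y k := by
    have e₁ := hxne hk
    have e₂ := hyne hk
    simp only [hx, hy]
    field_simp
    push_cast
    ring
  have hsum : ∑ k ∈ range n, 2 * (x k * E (k + 1) ^ 2) =
      4 * q - 6 * q ^ 2 + 2 * q ^ 3 + 1 / 8 * b := by
    have hexp : ∑ k ∈ range n, 2 * (x k * E (k + 1) ^ 2) =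
        2 * ∑ k ∈ range n, x k * E k ^ 2 +
        4 * (∑ k ∈ range n, x k * E k - ∑ k ∈ range n, y k * E k) +
        2 * (∑ k ∈ range n, x k - ∑ k ∈ range n, y k - ∑ k ∈ range n, y k ^ 2) := by
      rw [← sum_sub_distrib, ← sum_sub_distrib, ← sum_sub_distrib, mul_sum, mul_sum, mul_sum,
        ← sum_add_distrib, ← sum_add_distrib]
      refine sum_congr rfl fun k hk => ?_
      rw [hE]
      linear_combination (4 * E k + 2 * y k + 2) * hterm k (mem_range.1 hk)
    rw [hexp, r₂, r₄, r₅, r₆]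
    refine mul_left_cancel₀ h2 ?_
    have : 2 * (1 / 8 * b) = b / 4 := by
      field_simp
      ring
    linear_combination r₁ - 4 * r₃ - this
  rw [← hsum]
  refine HasResidue.sum _ fun k hk => ?_
  have hk' := mem_range.1 hk
  have hpz : HasResidue p (p : ℚ) 0 := by simpa using HasResidue.natCast (p := p) p
  have hk1 := HasResidue.natCast (p := p) (1 + k)
  have hden : (0 + 1 - 2 * ((1 + k : ℕ) : ZMod p)) * (0 + 2 * ((1 + k : ℕ) : ZMod p)) ≠ 0 := by
    have e₁ := hxne hk'
    have e₂ := hyne hk'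
    push_cast at e₁ e₂ ⊢
    refine mul_ne_zero (fun h => e₁ ?_) (fun h => e₂ ?_)
    · linear_combination -h
    · linear_combination h
  have hfinal := (((hpz.div (num 2) h2).sub hk1).mul ((hharm hk').pow 2)).div
    (((hpz.add .one).sub ((num 2).mul hk1)).mul (hpz.add ((num 2).mul hk1))) hden
  convert hfinal using 1
  rw [eq_div_iff hden]
  have e₁ : x k * (2 * k + 1) = 1 := by
    simpa [hx] using inv_mul_cancel₀ (hxne hk')
  push_cast
  linear_combination (-4 * E (k + 1) ^ 2 * (1 + k)) * e₁
end
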